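/- arXiv:0708.2510 — 2 statements merged into one kernel-verified Lean document; each statement's English description precedes it below -/
import Mathlib

section
/- Let H be a complex Hilbert space, J a signature operator on H, L a densely defined positive self-adjoint operator in H, and B := JL. Assume B is similar to a self-adjoint operator in H. Then for every pair φ₊ ∈ H₊, φ₋ ∈ H₋ and every 0 < τ < ∞, there exists a unique strong solution ψ of the boundary value problem dψ/dx = −Bψ(x) (0 < x < τ), P₊ψ(0) = φ₊, P₋ψ(τ) = φ₋. -/
open scoped ComplexOrder InnerProductSpace

noncomputable section

variable {H : Type*} [NormedAddCommGroup H] [InnerProductSpace ℂ H] [CompleteSpace H]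

/-- `J` is a signature operator: `J = J* = J⁻¹`. -/
def IsSignatureOperator (J : H →L[ℂ] H) : Prop :=
  IsSelfAdjoint J ∧ J.comp J = ContinuousLinearMap.id ℂ H

/-- The orthogonal projection onto `H₊ = ker (J - I)`, which equals `(I + J)/2`
for a signature operator `J`. -/
def Pplus (J : H →L[ℂ] H) : H →L[ℂ] H := (2⁻¹ : ℂ) • (ContinuousLinearMap.id ℂ H + J)

/-- The orthogonal projection onto `H₋ = ker (J + I)`, which equals `(I - J)/2`
for a signature operator `J`. -/
def Pminus (J : H →L[ℂ] H) : H →L[ℂ] H := (2⁻¹ : ℂ) • (ContinuousLinearMap.id ℂ H - J)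

/-- The composition `J ∘ L` of a bounded operator `J` with an unbounded operator `L`,
as an unbounded operator with the same domain as `L`. -/
def pmapComp (J : H →L[ℂ] H) (L : H →ₗ.[ℂ] H) : H →ₗ.[ℂ] H :=
  { domain := L.domain
    toFun := (J : H →ₗ[ℂ] H).comp L.toFun }

/-- `L` is a positive operator: `⟨L h, h⟩ > 0` for every nonzero `h ∈ dom L`. -/
def IsPositivePMap (L : H →ₗ.[ℂ] H) : Prop :=
  ∀ h : L.domain, (h : H) ≠ 0 → 0 < ⟪L h, (h : H)⟫_ℂ

/-- `B` is similar to a self-adjoint operator: there is a bounded operator `S` with bounded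
inverse mapping `dom B` onto the domain of a self-adjoint operator `A` such that
`A (S h) = S (B h)` for all `h ∈ dom B`. -/
def SimilarToSelfAdjoint (B : H →ₗ.[ℂ] H) : Prop :=
  ∃ (S : H ≃L[ℂ] H) (A : H →ₗ.[ℂ] H), IsSelfAdjoint A ∧
    (A.domain : Set H) = (fun h => S h) '' (B.domain : Set H) ∧
    ∀ (h : B.domain) (hSh : S (h : H) ∈ A.domain), A ⟨S (h : H), hSh⟩ = S (B h)

/-- `ψ` solves `ψ' = -B ψ + f` on the set `s` with a continuous derivative:
on `s`, `ψ` takes values in `dom B`, is differentiable with derivative `ψ'`,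
`ψ'` is continuous on `s`, and `ψ' x = -B (ψ x) + f x`. -/
def IsStrongSolutionOn (B : H →ₗ.[ℂ] H) (f : ℝ → H) (ψ : ℝ → H) (s : Set ℝ) : Prop :=
  ∃ ψ' : ℝ → H, ContinuousOn ψ' s ∧
    ∀ x ∈ s, HasDerivAt ψ (ψ' x) x ∧
      ∃ hx : ψ x ∈ B.domain, ψ' x = -(B ⟨ψ x, hx⟩) + f x

set_option linter.unusedSectionVars false

namespace SelfAdjointPMap

open LinearPMap (adjoint_isFormalAdjoint isSelfAdjoint_def mem_adjoint_domain_of_exists mem_graph_iff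
  adjoint_apply_eq)

variable {A : H →ₗ.[ℂ] H}

theorem inner_apply_of_isSelfAdjoint (hA : IsSelfAdjoint A) (x y : A.domain) :
    ⟪A x, (y : H)⟫_ℂ = ⟪(x : H), A y⟫_ℂ := by
  have h := adjoint_isFormalAdjoint hA.dense_domain
  rw [isSelfAdjoint_def.1 hA] at h
  exact h x y

/-- A self-adjoint operator extends its adjoint. -/
theorem mem_domain_of_isSelfAdjoint (hA : IsSelfAdjoint A) {y w : H}
    (h : ∀ x : A.domain, ⟪w, (x : H)⟫_ℂ = ⟪y, A x⟫_ℂ) :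
    ∃ hy : y ∈ A.domain, A ⟨y, hy⟩ = w := by
  have hmem : (y, w) ∈ A.adjoint.graph := by
    have hy := mem_adjoint_domain_of_exists y ⟨w, h⟩
    rw [mem_graph_iff]
    exact ⟨⟨y, hy⟩, rfl, adjoint_apply_eq hA.dense_domain _ h⟩
  rw [isSelfAdjoint_def.1 hA, mem_graph_iff] at hmem
  obtain ⟨⟨z, hz⟩, rfl, hw⟩ := hmem
  exact ⟨hz, hw⟩

theorem norm_sq_apply_add_smul (hA : IsSelfAdjoint A) {c : ℂ} (hc : star c = -c)
    (hc1 : ‖c‖ = 1) (x : A.domain) :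
    ‖A x + c • (x : H)‖ ^ 2 = ‖A x‖ ^ 2 + ‖(x : H)‖ ^ 2 := by
  have h : RCLike.re ⟪A x, c • (x : H)⟫_ℂ = 0 := by
    have h1 : star ⟪A x, (x : H)⟫_ℂ = ⟪A x, (x : H)⟫_ℂ := by
      rw [inner_apply_of_isSelfAdjoint hA x x]
      exact (inner_conj_symm _ _).trans (inner_apply_of_isSelfAdjoint hA x x)
    have h2 : star ⟪A x, c • (x : H)⟫_ℂ = -⟪A x, c • (x : H)⟫_ℂ := by
      rw [inner_smul_right, star_mul', h1, hc, neg_mul]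
    have h3 := congrArg Complex.re h2
    simp only [Complex.star_def, Complex.conj_re, Complex.neg_re] at h3
    change (⟪A x, c • (x : H)⟫_ℂ).re = 0
    linarith
  rw [@norm_add_sq ℂ, h, norm_smul, hc1]
  ring

theorem surjective_apply_add_smul (hA : IsSelfAdjoint A) {c : ℂ} (hc : star c = -c)
    (hc1 : ‖c‖ = 1) (y : H) : ∃ x : A.domain, A x + c • (x : H) = y := by
  let T : A.graph →L[ℂ] H :=
    (ContinuousLinearMap.snd ℂ H H + c • ContinuousLinearMap.fst ℂ H H).comp A.graph.subtypeL
  have hT (x : A.domain) : T ⟨_, A.mem_graph x⟩ = A x + c • (x : H) := rfl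
  have hanti : AntilipschitzWith 1 T := by
    refine T.antilipschitz_of_bound fun g => ?_
    obtain ⟨⟨a, b⟩, hg⟩ := g
    obtain ⟨x, rfl, rfl⟩ := (mem_graph_iff A).1 hg
    have h := norm_sq_apply_add_smul hA hc hc1 x
    rw [hT, NNReal.coe_one, one_mul]
    change max ‖(x : H)‖ ‖A x‖ ≤ _
    refine max_le ?_ ?_ <;> refine le_of_sq_le_sq ?_ (norm_nonneg _) <;> rw [h] <;>
      nlinarith [sq_nonneg ‖A x‖, sq_nonneg ‖(x : H)‖]
  have : CompleteSpace A.graph := (show IsClosed (A.graph : Set (H × H)) from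
    hA.isClosed).completeSpace_coe
  have hclosed : IsClosed (T.range : Set H) := hanti.isClosed_range T.uniformContinuous
  have := hclosed.completeSpace_coe
  have htop : T.range = ⊤ := by
    rw [← Submodule.orthogonal_eq_bot_iff, Submodule.eq_bot_iff]
    intro w hw
    have hw' (x : A.domain) : ⟪w, A x + c • (x : H)⟫_ℂ = 0 :=
      Submodule.inner_left_of_mem_orthogonal (LinearMap.mem_range.2 ⟨⟨_, A.mem_graph x⟩, hT x⟩) hw
    obtain ⟨hwd, hAw⟩ := mem_domain_of_isSelfAdjoint hA (y := w) (w := c • w) fun x => by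
      have h := hw' x
      rw [inner_add_right, inner_smul_right] at h
      rw [inner_smul_left, ← Complex.star_def, hc, neg_mul]
      linear_combination -h
    have h := norm_sq_apply_add_smul hA (c := -c) (by simp [hc]) (by simpa using hc1) ⟨w, hwd⟩
    rw [hAw] at h
    simp only [neg_smul, add_neg_cancel, norm_zero] at h
    have : ‖w‖ ^ 2 = 0 := by nlinarith [sq_nonneg ‖c • w‖, sq_nonneg ‖w‖]
    simpa using this
  obtain ⟨⟨⟨a, b⟩, hg⟩, hgy⟩ := LinearMap.mem_range.1 (htop ▸ Submodule.mem_top : y ∈ T.range)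
  obtain ⟨x, rfl, rfl⟩ := (mem_graph_iff A).1 hg
  exact ⟨x, hgy⟩

theorem injective_apply_add_smul (hA : IsSelfAdjoint A) {c : ℂ} (hc : star c = -c)
    (hc1 : ‖c‖ = 1) {x y : A.domain} (h : A x + c • (x : H) = A y + c • (y : H)) : x = y := by
  have h1 := norm_sq_apply_add_smul hA hc hc1 (x - y)
  have h2 : A (x - y) + c • ((x - y : A.domain) : H) = 0 := by
    rw [LinearPMap.map_sub, Submodule.coe_sub, smul_sub, sub_add_sub_comm, h, sub_self]
  rw [h2, norm_zero] at h1
  have : ‖((x - y : A.domain) : H)‖ ^ 2 = 0 := by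
    nlinarith [sq_nonneg ‖A (x - y)‖, sq_nonneg ‖((x - y : A.domain) : H)‖]
  exact Subtype.ext (sub_eq_zero.1 (by simpa using this))

/-- For imaginary `c` of modulus one, `A + c` has a bounded everywhere defined inverse. -/
theorem exists_resolvent (hA : IsSelfAdjoint A) {c : ℂ} (hc : star c = -c) (hc1 : ‖c‖ = 1) :
    ∃ R : H →L[ℂ] H, (∀ x : A.domain, R (A x + c • (x : H)) = x) ∧
      ∀ y, ∃ h : R y ∈ A.domain, A ⟨R y, h⟩ + c • R y = y := by
  choose r hr using surjective_apply_add_smul hA hc hc1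
  let R : H →ₗ[ℂ] H :=
    { toFun y := r y
      map_add' y z := by
        rw [← Submodule.coe_add]
        congr 1
        refine injective_apply_add_smul hA hc hc1 ?_
        rw [hr, LinearPMap.map_add, Submodule.coe_add, smul_add, add_add_add_comm, hr, hr]
      map_smul' a y := by
        rw [RingHom.id_apply, ← Submodule.coe_smul]
        congr 1
        refine injective_apply_add_smul hA hc hc1 ?_
        rw [hr, LinearPMap.map_smul, Submodule.coe_smul, smul_comm c a, ← smul_add, hr] }
  refine ⟨R.mkContinuous 1 fun y => ?_, fun x => ?_, fun y => ⟨(r y).2, hr y⟩⟩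
  · have h := norm_sq_apply_add_smul hA hc hc1 (r y)
    rw [hr] at h
    rw [one_mul]
    refine le_of_sq_le_sq ?_ (norm_nonneg _)
    change ‖(r y : H)‖ ^ 2 ≤ _
    nlinarith [sq_nonneg ‖A (r y)‖]
  · exact congrArg Subtype.val (injective_apply_add_smul hA hc hc1 (hr _))

/-- The resolvent `R = (A + i)⁻¹` of a self-adjoint operator, with the resolvent identity
between `R` and `R* = (A - i)⁻¹`. -/
theorem exists_normal_resolvent (hA : IsSelfAdjoint A) :
    ∃ R : H →L[ℂ] H, IsStarNormal R ∧ star R - R = (2 * Complex.I) • (star R * R) ∧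
      DenseRange R ∧ ∀ y, ∃ h : R y ∈ A.domain, A ⟨R y, h⟩ + Complex.I • R y = y := by
  obtain ⟨R, hRl, hRr⟩ := exists_resolvent hA (c := Complex.I) (by simp) (by simp)
  obtain ⟨Q, hQl, hQr⟩ := exists_resolvent hA (c := -Complex.I) (by simp) (by simp)
  have hstar : star R = Q := by
    rw [ContinuousLinearMap.star_eq_adjoint, eq_comm, ContinuousLinearMap.eq_adjoint_iff]
    intro x y
    obtain ⟨hx, hx'⟩ := hQr x
    obtain ⟨hy, hy'⟩ := hRr y
    nth_rw 1 [← hy']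
    nth_rw 2 [← hx']
    rw [inner_add_left, inner_add_right, inner_smul_left, inner_smul_right,
      ← inner_apply_of_isSelfAdjoint hA ⟨Q x, hx⟩ ⟨R y, hy⟩]
    simp
  have h1 : Q - R = (2 * Complex.I) • (Q * R) := by
    ext y
    obtain ⟨hx, hx'⟩ := hQr y
    obtain ⟨hy, hy'⟩ := hRr y
    have h := hQl ⟨R y, hy⟩
    have e : A ⟨R y, hy⟩ + -Complex.I • R y = y - (2 * Complex.I) • R y := by
      nth_rw 3 [← hy']
      module
    rw [e, map_sub, map_smul] at h
    change Q y - R y = (2 * Complex.I) • Q (R y)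
    exact sub_eq_iff_eq_add'.2 (sub_eq_iff_eq_add.1 h)
  have h2 : Q - R = (2 * Complex.I) • (R * Q) := by
    ext y
    obtain ⟨hx, hx'⟩ := hQr y
    obtain ⟨hy, hy'⟩ := hRr y
    have h := hRl ⟨Q y, hx⟩
    have e : A ⟨Q y, hx⟩ + Complex.I • Q y = y + (2 * Complex.I) • Q y := by
      nth_rw 3 [← hx']
      module
    rw [e, map_add, map_smul] at h
    change Q y - R y = (2 * Complex.I) • R (Q y)
    exact sub_eq_iff_eq_add'.2 h.symm
  refine ⟨R, ⟨?_⟩, ?_, ?_, hRr⟩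
  · rw [hstar]
    exact smul_right_injective _ (by simp : (2 * Complex.I) ≠ 0) (h1.symm.trans h2)
  · rw [hstar, h1]
  · refine hA.dense_domain.mono fun x hx => ⟨_, hRl ⟨x, hx⟩⟩

end SelfAdjointPMap

namespace ResolventCalculus

open Complex

/-- The function on the spectrum of the resolvent `(A + i)⁻¹` which corresponds to the function
`f` on the spectrum of `A`. -/
def lift (f : ℝ → ℂ) (z : ℂ) : ℂ := if z = 0 then 0 else f (z⁻¹).re

/-- The operator `f(A)`, expressed through the resolvent `R = (A + i)⁻¹`. -/
def opOf (R : H →L[ℂ] H) (f : ℝ → ℂ) : H →L[ℂ] H := cfc (lift f) R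

/-- `f` is continuous and `f t = O(1 / t)` at infinity. -/
def Decays (f : ℝ → ℂ) : Prop := Continuous f ∧ ∃ C, ∀ t : ℝ, ‖f t‖ * ‖(t : ℂ) + I‖ ≤ C

/-- `R` is normal and satisfies the resolvent identity of `(A + i)⁻¹` with `A` self-adjoint. -/
def IsResolvent (R : H →L[ℂ] H) : Prop :=
  IsStarNormal R ∧ star R - R = (2 * I) • (star R * R)

variable {R : H →L[ℂ] H}

theorem IsResolvent.inv_eq (hR : IsResolvent R) {z : ℂ} (hz : z ∈ spectrum ℂ R) (h0 : z ≠ 0) :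
    z⁻¹ = ((z⁻¹).re : ℂ) + I := by
  have := hR.1
  have h := hR.2
  have e1 : cfc (fun z : ℂ => star z - z) R = star R - R := by
    rw [cfc_sub (fun z : ℂ => star z) (fun z => z) R, cfc_id' ℂ R, cfc_star_id R]
  have e2 : cfc (fun z : ℂ => (2 * I) * (star z * z)) R = (2 * I) • (star R * R) := by
    rw [cfc_const_mul (2 * I) (fun z : ℂ => star z * z) R,
      cfc_mul (fun z : ℂ => star z) (fun z => z) R, cfc_id' ℂ R, cfc_star_id R]
  have h3 := eqOn_of_cfc_eq_cfc (e1.trans (h.trans e2.symm)) (a := R)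
  replace h3 := h3 hz
  have h0' : star z ≠ 0 := by simpa using h0
  have h4 : z⁻¹ - star z⁻¹ = 2 * I := by
    rw [star_inv₀]
    field_simp
    simpa [mul_comm, mul_assoc, mul_left_comm] using h3
  have h5 := congrArg Complex.im h4
  apply Complex.ext
  · simp
  · simp only [Complex.star_def, Complex.sub_im, Complex.conj_im] at h5
    simp only [Complex.add_im, Complex.ofReal_im, Complex.I_im]
    norm_num at h5
    simp at h5 ⊢
    linarith

theorem IsResolvent.mul_eq_one (hR : IsResolvent R) {z : ℂ} (hz : z ∈ spectrum ℂ R)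
    (h0 : z ≠ 0) : z * (((z⁻¹).re : ℂ) + I) = 1 := by
  rw [← hR.inv_eq hz h0, mul_inv_cancel₀ h0]

theorem IsResolvent.norm_mul_eq_one (hR : IsResolvent R) {z : ℂ} (hz : z ∈ spectrum ℂ R)
    (h0 : z ≠ 0) : ‖z‖ * ‖((z⁻¹).re : ℂ) + I‖ = 1 := by
  rw [← norm_mul, hR.mul_eq_one hz h0, norm_one]

theorem continuousOn_lift (hR : IsResolvent R) {f : ℝ → ℂ} (hf : Decays f) :
    ContinuousOn (lift f) (spectrum ℂ R) := by
  intro z hz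
  by_cases h0 : z = 0
  · subst h0
    obtain ⟨C, hC⟩ := hf.2
    have hbound : ∀ w ∈ spectrum ℂ R, ‖lift f w‖ ≤ C * ‖w‖ := by
      intro w hw
      by_cases hw0 : w = 0
      · simp [hw0, lift]
      · have h1 := hC (w⁻¹).re
        have h2 := hR.norm_mul_eq_one hw hw0
        rw [lift, if_neg hw0]
        calc ‖f (w⁻¹).re‖ = ‖f (w⁻¹).re‖ * ‖((w⁻¹).re : ℂ) + I‖ * ‖w‖ := by
              rw [mul_assoc, mul_comm _ ‖w‖, h2, mul_one]
          _ ≤ C * ‖w‖ := by gcongr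
    have hl0 : lift f 0 = 0 := by simp [lift]
    rw [ContinuousWithinAt, hl0, tendsto_zero_iff_norm_tendsto_zero]
    refine squeeze_zero' (Filter.Eventually.of_forall fun _ => norm_nonneg _)
      (eventually_nhdsWithin_of_forall hbound) ?_
    have : ContinuousAt (fun w : ℂ => C * ‖w‖) 0 := by fun_prop
    simpa [ContinuousAt] using this.tendsto.mono_left nhdsWithin_le_nhds
  · refine ContinuousAt.continuousWithinAt ?_
    have h1 : ContinuousAt (fun w : ℂ => f (w⁻¹).re) z := by
      refine hf.1.continuousAt.comp (Complex.continuous_re.continuousAt.comp ?_)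
      exact continuousAt_inv₀ h0
    refine h1.congr ?_
    filter_upwards [isOpen_ne.mem_nhds h0] with w hw
    exact (if_neg hw).symm

theorem norm_opOf_le (R : H →L[ℂ] H) {f : ℝ → ℂ} {c : ℝ} (h : ∀ t, ‖f t‖ ≤ c) :
    ‖opOf R f‖ ≤ c := by
  have hc : 0 ≤ c := (norm_nonneg _).trans (h 0)
  refine norm_cfc_le hc fun z _ => ?_
  unfold lift
  split_ifs
  · simpa using hc
  · exact h _

theorem Decays.add_mul {f g : ℝ → ℂ} (hf : Decays f) (hg : Decays g) (a : ℂ) :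
    Decays fun t => f t + a * g t := by
  obtain ⟨c1, C1, hC1⟩ := hf
  obtain ⟨c2, C2, hC2⟩ := hg
  refine ⟨c1.add (continuous_const.mul c2), C1 + ‖a‖ * C2, fun t => ?_⟩
  calc _ ≤ (‖f t‖ + ‖a‖ * ‖g t‖) * ‖(t : ℂ) + I‖ := by
        gcongr
        exact (norm_add_le _ _).trans (by rw [norm_mul])
    _ = ‖f t‖ * ‖(t : ℂ) + I‖ + ‖a‖ * (‖g t‖ * ‖(t : ℂ) + I‖) := by ring
    _ ≤ _ := by
        gcongr
        exacts [hC1 t, hC2 t]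

theorem opOf_add_smul (hR : IsResolvent R) {f g : ℝ → ℂ} (hf : Decays f) (hg : Decays g) (a : ℂ) :
    opOf R (fun t => f t + a * g t) = opOf R f + a • opOf R g := by
  have hf' := continuousOn_lift hR hf
  have hg' := continuousOn_lift hR hg
  unfold opOf
  rw [← cfc_const_mul a (lift g) R, ← cfc_add R (lift f) (fun z => a * lift g z) hf'
    (continuousOn_const.mul hg')]
  congr 1
  ext z
  unfold lift
  split_ifs <;> simp

theorem mul_opOf (hR : IsResolvent R) {f g : ℝ → ℂ} (hf : Decays f)
    (hfg : ∀ t : ℝ, f t = (t + I) * g t) : R * opOf R f = opOf R g := by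
  have := hR.1
  have hf' := continuousOn_lift hR hf
  nth_rw 1 [← cfc_id' ℂ R]
  unfold opOf
  rw [← cfc_mul (fun z => z) (lift f) R]
  refine cfc_congr fun z hz => ?_
  unfold lift
  by_cases h0 : z = 0
  · simp [h0]
  · simp only [h0, if_false]
    rw [hfg, ← mul_assoc, hR.mul_eq_one hz h0, one_mul]

theorem norm_opOf_mul_sub_le (hR : IsResolvent R) {f : ℝ → ℂ} (hf : Decays f) (a : ℂ) {c : ℝ}
    (h : ∀ t : ℝ, ‖f t - a‖ ≤ c * ‖(t : ℂ) + I‖) : ‖opOf R f * R - a • R‖ ≤ c := by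
  have := hR.1
  have hf' := continuousOn_lift hR hf
  have hc : 0 ≤ c := by
    have := (norm_nonneg _).trans (h 0)
    simpa using this
  have e : opOf R f * R - a • R = cfc (fun z => lift f z * z - a * z) R := by
    rw [cfc_sub (fun z => lift f z * z) (fun z => a * z) R,
      cfc_mul (lift f) (fun z => z) R, cfc_const_mul a (fun z => z) R, cfc_id' ℂ R]
    rfl
  rw [e]
  refine norm_cfc_le hc fun z hz => ?_
  by_cases h0 : z = 0
  · simpa [h0] using hc
  · rw [← sub_mul, norm_mul, lift, if_neg h0]
    calc _ ≤ c * ‖((z⁻¹).re : ℂ) + I‖ * ‖z‖ := by gcongr; exact h _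
      _ = c := by rw [mul_assoc, mul_comm _ ‖z‖, hR.norm_mul_eq_one hz h0, mul_one]

end ResolventCalculus

namespace AntiperiodicKernel

open Complex ResolventCalculus

/-- The solution `x ↦ e^{-xt} / (1 + e^{-τt})` of `q' = -t q` with `q 0 + q τ = 1`. -/
def q (τ x t : ℝ) : ℝ := Real.exp (-(x * t)) / (1 + Real.exp (-(τ * t)))

/-- The iterated derivatives, up to sign, of `q` with respect to `x`. -/
def kern (τ : ℝ) (k : ℕ) (x : ℝ) (t : ℝ) : ℂ := ((t ^ k * q τ x t : ℝ) : ℂ)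

theorem q_nonneg (τ x t : ℝ) : 0 ≤ q τ x t := by unfold q; positivity

theorem q_zero_add_q (τ t : ℝ) : q τ 0 t + q τ τ t = 1 := by
  unfold q
  have : 1 + Real.exp (-(τ * t)) ≠ 0 := by positivity
  simp only [zero_mul, neg_zero, Real.exp_zero]
  field_simp

theorem continuous_q (τ x : ℝ) : Continuous (q τ x) := by
  unfold q
  exact Continuous.div (by fun_prop) (by fun_prop) fun t => by positivity

theorem q_le {τ x δ : ℝ} (h1 : δ ≤ x) (h2 : x ≤ τ - δ) (t : ℝ) :
    q τ x t ≤ Real.exp (-(δ * |t|)) := by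
  unfold q
  rw [div_le_iff₀ (by positivity), mul_add, mul_one, ← Real.exp_add]
  rcases le_total 0 t with ht | ht
  · have : Real.exp (-(x * t)) ≤ Real.exp (-(δ * |t|)) := by
      rw [abs_of_nonneg ht]
      gcongr
    linarith [Real.exp_pos (-(δ * |t|) + -(τ * t))]
  · have : Real.exp (-(x * t)) ≤ Real.exp (-(δ * |t|) + -(τ * t)) := by
      rw [abs_of_nonpos ht]
      gcongr
      nlinarith
    linarith [Real.exp_pos (-(δ * |t|))]

theorem q_le_one {τ x : ℝ} (h : x ∈ Set.Icc 0 τ) (t : ℝ) : q τ x t ≤ 1 := by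
  simpa using q_le (δ := 0) h.1 (by simpa using h.2) t

theorem abs_pow_mul_q_le {τ x δ : ℝ} (hδ : 0 < δ) (h1 : δ ≤ x) (h2 : x ≤ τ - δ) (k : ℕ) (t : ℝ) :
    |t| ^ k * q τ x t ≤ k.factorial / δ ^ k := by
  have h := Real.pow_div_factorial_le_exp (x := δ * |t|) (by positivity) k
  rw [div_le_iff₀ (by positivity), mul_pow] at h
  calc |t| ^ k * q τ x t ≤ |t| ^ k * Real.exp (-(δ * |t|)) := by
        gcongr
        exact q_le h1 h2 t
    _ = (δ ^ k * |t| ^ k) * Real.exp (-(δ * |t|)) / δ ^ k := by field_simp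
    _ ≤ (Real.exp (δ * |t|) * k.factorial) * Real.exp (-(δ * |t|)) / δ ^ k := by gcongr
    _ = k.factorial / δ ^ k := by rw [Real.exp_neg]; field_simp

/-- The tangent line estimate coming from the convexity of `q` in `x`. -/
theorem q_sub_mul_le (τ x y t : ℝ) : q τ x t - (y - x) * t * q τ x t ≤ q τ y t := by
  have h : 1 - (y - x) * t ≤ Real.exp (-((y - x) * t)) := by
    linarith [Real.add_one_le_exp (-((y - x) * t))]
  have e : q τ y t = Real.exp (-((y - x) * t)) * q τ x t := by
    unfold q
    rw [← mul_div_assoc, ← Real.exp_add]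
    ring_nf
  rw [e]
  nlinarith [q_nonneg τ x t]

theorem abs_q_sub_le (τ x y t : ℝ) :
    |q τ y t - q τ x t| ≤ |y - x| * |t| * (q τ x t + q τ y t) := by
  have h1 := q_sub_mul_le τ x y t
  have h2 := q_sub_mul_le τ y x t
  have h3 : |(y - x) * t| = |y - x| * |t| := abs_mul _ _
  have h4 := le_abs_self ((y - x) * t)
  have h5 := neg_abs_le ((y - x) * t)
  rw [← h3]
  have hx := q_nonneg τ x t
  have hy := q_nonneg τ y t
  rw [abs_le]
  constructor <;> nlinarith

theorem abs_q_sub_add_le (τ x y t : ℝ) :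
    |q τ y t - q τ x t + (y - x) * t * q τ x t| ≤
      (y - x) ^ 2 * (|t| ^ 2 * q τ x t + |t| ^ 2 * q τ y t) := by
  have h1 := q_sub_mul_le τ x y t
  have h2 := q_sub_mul_le τ y x t
  have h3 := abs_q_sub_le τ x y t
  rw [abs_of_nonneg (by linarith)]
  calc q τ y t - q τ x t + (y - x) * t * q τ x t ≤ -((y - x) * t * (q τ y t - q τ x t)) := by
        linarith
    _ ≤ |(y - x) * t * (q τ y t - q τ x t)| := neg_le_abs _
    _ = |y - x| * |t| * |q τ y t - q τ x t| := by rw [abs_mul, abs_mul]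
    _ ≤ |y - x| * |t| * (|y - x| * |t| * (q τ x t + q τ y t)) := by gcongr
    _ = |y - x| ^ 2 * (|t| ^ 2 * q τ x t + |t| ^ 2 * q τ y t) := by ring
    _ = _ := by rw [sq_abs (y - x)]

theorem abs_le_norm_add_I (t : ℝ) : |t| ≤ ‖(t : ℂ) + I‖ := by
  simpa using Complex.abs_re_le_norm ((t : ℂ) + I)

theorem norm_kern (τ : ℝ) (k : ℕ) (x t : ℝ) : ‖kern τ k x t‖ = |t| ^ k * q τ x t := by
  rw [kern, Complex.norm_real, Real.norm_eq_abs, abs_mul, abs_pow, abs_of_nonneg (q_nonneg τ x t)]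

theorem exists_margin {τ x : ℝ} (hx : x ∈ Set.Ioo 0 τ) : ∃ δ > 0, δ < x ∧ x < τ - δ := by
  obtain ⟨h1, h2⟩ := hx
  refine ⟨min x (τ - x) / 2, ?_, ?_, ?_⟩
  · have : 0 < min x (τ - x) := lt_min h1 (by linarith)
    linarith
  · linarith [min_le_left x (τ - x), min_le_right x (τ - x)]
  · linarith [min_le_left x (τ - x), min_le_right x (τ - x)]

theorem decays_kern {τ x : ℝ} (hx : x ∈ Set.Ioo 0 τ) (k : ℕ) : Decays (kern τ k x) := by
  obtain ⟨δ, hδ, h1, h2⟩ := exists_margin hx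
  refine ⟨Complex.continuous_ofReal.comp ((continuous_pow k).mul (continuous_q τ x)),
    (k + 1).factorial / δ ^ (k + 1) + k.factorial / δ ^ k, fun t => ?_⟩
  rw [norm_kern]
  have hq := q_nonneg τ x t
  calc |t| ^ k * q τ x t * ‖(t : ℂ) + I‖ ≤ |t| ^ k * q τ x t * (|t| + 1) := by
        gcongr
        exact (norm_add_le _ _).trans (by simp)
    _ = |t| ^ (k + 1) * q τ x t + |t| ^ k * q τ x t := by ring
    _ ≤ _ := add_le_add (abs_pow_mul_q_le hδ h1.le h2.le (k + 1) t)
        (abs_pow_mul_q_le hδ h1.le h2.le k t)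

variable {R : H →L[ℂ] H} {τ : ℝ}

theorem hasDerivAt_opOf_kern (hR : IsResolvent R) {x : ℝ} (hx : x ∈ Set.Ioo 0 τ) (k : ℕ) :
    HasDerivAt (fun y => opOf R (kern τ k y)) (-opOf R (kern τ (k + 1) x)) x := by
  obtain ⟨δ, hδ, h1, h2⟩ := exists_margin hx
  set C : ℝ := 2 * ((k + 2).factorial / δ ^ (k + 2)) with hC
  have hbound : ∀ᶠ y in nhds x, ‖opOf R (kern τ k y) - opOf R (kern τ k x) -
      (y - x) • -opOf R (kern τ (k + 1) x)‖ ≤ C * (y - x) ^ 2 := by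
    filter_upwards [Ioo_mem_nhds h1 h2] with y hy
    have hy' : y ∈ Set.Ioo 0 τ := ⟨hδ.trans hy.1, by linarith [hy.2]⟩
    have dx := decays_kern hx k
    have dy := decays_kern hy' k
    have dx' := decays_kern hx (k + 1)
    have d1 := dx.add_mul dx' (-(y - x : ℝ) : ℂ)
    have e : opOf R (kern τ k y) - opOf R (kern τ k x) - (y - x) • -opOf R (kern τ (k + 1) x) =
        opOf R (fun t => kern τ k y t +
          (-1) * (kern τ k x t + (-(y - x : ℝ) : ℂ) * kern τ (k + 1) x t)) := by
      rw [opOf_add_smul hR dy d1, opOf_add_smul hR dx dx', ← Complex.coe_smul (y - x)]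
      module
    rw [e]
    refine norm_opOf_le R fun t => ?_
    have e2 : kern τ k y t + (-1) * (kern τ k x t + (-(y - x : ℝ) : ℂ) * kern τ (k + 1) x t) =
        ((t ^ k * (q τ y t - q τ x t + (y - x) * t * q τ x t) : ℝ) : ℂ) := by
      unfold kern
      push_cast
      ring
    rw [e2, Complex.norm_real, Real.norm_eq_abs, abs_mul, abs_pow]
    calc _ ≤ |t| ^ k * ((y - x) ^ 2 * (|t| ^ 2 * q τ x t + |t| ^ 2 * q τ y t)) := by
          gcongr
          exact abs_q_sub_add_le τ x y t
      _ = (|t| ^ (k + 2) * q τ x t + |t| ^ (k + 2) * q τ y t) * (y - x) ^ 2 := by ring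
      _ ≤ C * (y - x) ^ 2 := by
          gcongr
          rw [hC, two_mul]
          exact add_le_add (abs_pow_mul_q_le hδ h1.le h2.le _ t)
            (abs_pow_mul_q_le hδ hy.1.le hy.2.le _ t)
  rw [hasDerivAt_iff_isLittleO]
  have hO : (fun y => opOf R (kern τ k y) - opOf R (kern τ k x) -
      (y - x) • -opOf R (kern τ (k + 1) x)) =O[nhds x] fun y => (y - x) ^ 2 := by
    refine Asymptotics.IsBigO.of_bound C ?_
    filter_upwards [hbound] with y hy
    rwa [Real.norm_of_nonneg (sq_nonneg _)]
  refine hO.trans_isLittleO ?_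
  have h0 : Filter.Tendsto (fun y => y - x) (nhds x) (nhds 0) := by
    have : ContinuousAt (fun y => y - x) x := by fun_prop
    simpa [ContinuousAt] using this.tendsto
  exact (Asymptotics.isLittleO_pow_id one_lt_two).comp_tendsto h0

theorem norm_opOf_kern_le (R : H →L[ℂ] H) {x : ℝ} (hx : x ∈ Set.Ioo 0 τ) :
    ‖opOf R (kern τ 0 x)‖ ≤ 1 := by
  refine norm_opOf_le R fun t => ?_
  rw [norm_kern, pow_zero, one_mul]
  exact q_le_one (Set.Ioo_subset_Icc_self hx) t

theorem norm_kern_sub_le {x y : ℝ} (hx : x ∈ Set.Icc 0 τ) (hy : y ∈ Set.Icc 0 τ) (t : ℝ) :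
    |q τ y t - q τ x t| ≤ 2 * |y - x| * ‖(t : ℂ) + I‖ := by
  refine (abs_q_sub_le τ x y t).trans ?_
  calc |y - x| * |t| * (q τ x t + q τ y t) ≤ |y - x| * ‖(t : ℂ) + I‖ * (1 + 1) := by
        gcongr
        · linarith [q_nonneg τ x t, q_nonneg τ y t]
        · exact abs_le_norm_add_I t
        · exact q_le_one hx t
        · exact q_le_one hy t
    _ = _ := by ring

theorem norm_opOf_kern_mul_sub_le (hR : IsResolvent R) {x y : ℝ} (hx : x ∈ Set.Ioo 0 τ)
    (hy : y ∈ Set.Ioo 0 τ) :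
    ‖opOf R (kern τ 0 y) * R - opOf R (kern τ 0 x) * R‖ ≤ 2 * |y - x| := by
  have dx := decays_kern hx 0
  have dy := decays_kern hy 0
  have hb (t : ℝ) : ‖kern τ 0 y t + (-1) * kern τ 0 x t - 0‖ ≤ 2 * |y - x| * ‖(t : ℂ) + I‖ := by
    have e : kern τ 0 y t + (-1) * kern τ 0 x t - 0 = ((q τ y t - q τ x t : ℝ) : ℂ) := by
      unfold kern
      push_cast
      ring
    rw [e, Complex.norm_real, Real.norm_eq_abs]
    exact norm_kern_sub_le (Set.Ioo_subset_Icc_self hx) (Set.Ioo_subset_Icc_self hy) t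
  have h := norm_opOf_mul_sub_le hR (dy.add_mul dx (-1)) 0 hb
  rwa [opOf_add_smul hR dy dx, zero_smul, sub_zero, add_mul, neg_one_smul, neg_mul,
    ← sub_eq_add_neg] at h

theorem norm_opOf_kern_add_sub_le (hR : IsResolvent R) {x : ℝ} (hx : x ∈ Set.Ioo 0 τ) :
    ‖opOf R (kern τ 0 x) * R + opOf R (kern τ 0 (τ - x)) * R - R‖ ≤ 4 * x := by
  have hx' : τ - x ∈ Set.Ioo 0 τ := ⟨by linarith [hx.2], by linarith [hx.1]⟩
  have hτ : 0 ≤ τ := (hx.1.trans hx.2).le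
  have dx := decays_kern hx 0
  have dy := decays_kern hx' 0
  have hb (t : ℝ) : ‖kern τ 0 x t + 1 * kern τ 0 (τ - x) t - 1‖ ≤ 4 * x * ‖(t : ℂ) + I‖ := by
    have e : kern τ 0 x t + 1 * kern τ 0 (τ - x) t - 1 =
        (((q τ x t - q τ 0 t) + (q τ (τ - x) t - q τ τ t) : ℝ) : ℂ) := by
      have h := q_zero_add_q τ t
      have h' : ((q τ 0 t + q τ τ t : ℝ) : ℂ) = 1 := by rw [h, Complex.ofReal_one]
      rw [one_mul, ← h']
      unfold kern
      push_cast
      ring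
    rw [e, Complex.norm_real, Real.norm_eq_abs]
    have b1 := norm_kern_sub_le (Set.left_mem_Icc.2 hτ) (Set.Ioo_subset_Icc_self hx) t
    have b2 := norm_kern_sub_le (Set.right_mem_Icc.2 hτ) (Set.Ioo_subset_Icc_self hx') t
    have a1 : |x - 0| = x := by rw [sub_zero, abs_of_pos hx.1]
    have a2 : |τ - x - τ| = x := by rw [sub_sub_cancel_left, abs_neg, abs_of_pos hx.1]
    rw [a1] at b1
    rw [a2] at b2
    refine (abs_add_le _ _).trans ((add_le_add b1 b2).trans (le_of_eq ?_))
    ring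
  have h := norm_opOf_mul_sub_le hR (dx.add_mul dy 1) 1 hb
  rwa [opOf_add_smul hR dx dy, one_smul, one_smul, add_mul] at h

end AntiperiodicKernel

namespace SelfAdjointPMap

open AntiperiodicKernel ResolventCalculus Filter Topology

variable {A : H →ₗ.[ℂ] H} {R : H →L[ℂ] H} {τ : ℝ}

theorem uniformContinuousOn_opOf_kern (hR : IsResolvent R) (hd : DenseRange R) (u : H) :
    UniformContinuousOn (fun x => opOf R (kern τ 0 x) u) (Set.Ioo 0 τ) := by
  rw [Metric.uniformContinuousOn_iff]
  intro ε hε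
  obtain ⟨v, hv⟩ := hd.exists_dist_lt u (show 0 < ε / 4 by linarith)
  refine ⟨ε / (4 * (‖v‖ + 1)), by positivity, fun x hx y hy hxy => ?_⟩
  have h1 (z : ℝ) (hz : z ∈ Set.Ioo 0 τ) :
      ‖opOf R (kern τ 0 z) u - opOf R (kern τ 0 z) (R v)‖ ≤ ε / 4 := by
    rw [← map_sub]
    refine ((opOf R (kern τ 0 z)).le_of_opNorm_le (norm_opOf_kern_le R hz) _).trans ?_
    rw [one_mul, ← dist_eq_norm]
    exact hv.le
  have h2 : ‖opOf R (kern τ 0 x) (R v) - opOf R (kern τ 0 y) (R v)‖ < ε / 2 := by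
    refine (ContinuousLinearMap.le_of_opNorm_le _ (norm_opOf_kern_mul_sub_le hR hy hx) v).trans_lt
      ?_
    rw [Real.dist_eq, lt_div_iff₀ (by positivity)] at hxy
    nlinarith [abs_nonneg (x - y), norm_nonneg v]
  rw [dist_eq_norm]
  calc _ = ‖(opOf R (kern τ 0 x) u - opOf R (kern τ 0 x) (R v)) +
        (opOf R (kern τ 0 x) (R v) - opOf R (kern τ 0 y) (R v)) -
        (opOf R (kern τ 0 y) u - opOf R (kern τ 0 y) (R v))‖ := by congr 1; abel
    _ ≤ _ := (norm_sub_le _ _).trans (add_le_add_left (norm_add_le _ _) _)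
    _ < ε := by linarith [h1 x hx, h1 y hy]

theorem exists_tendsto_opOf_kern (hR : IsResolvent R) (hd : DenseRange R) {x : ℝ}
    (hx : x ∈ closure (Set.Ioo 0 τ)) (u : H) :
    ∃ y, Tendsto (fun s => opOf R (kern τ 0 s) u) (𝓝[Set.Ioo 0 τ] x) (𝓝 y) := by
  have : (𝓝[Set.Ioo 0 τ] x).NeBot := mem_closure_iff_nhdsWithin_neBot.1 hx
  rw [← cauchy_map_iff_exists_tendsto]
  exact (cauchy_nhds.mono nhdsWithin_le_nhds).map_of_le (uniformContinuousOn_opOf_kern hR hd u)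
    (le_principal_iff.2 self_mem_nhdsWithin)

/-- The boundary value problem `ψ' = -A ψ`, `ψ 0 + ψ τ = u` is solved by a family of bounded
operators applied to `u`. -/
theorem exists_antiperiodic_solution (hA : IsSelfAdjoint A) (hτ : 0 < τ) :
    ∃ M : ℝ → H →L[ℂ] H, ∀ u, ContinuousOn (fun x => M x u) (Set.Icc 0 τ) ∧
      M 0 u + M τ u = u ∧ IsStrongSolutionOn A (fun _ => 0) (fun x => M x u) (Set.Ioo 0 τ) := by
  obtain ⟨R, hRn, hRi, hd, hRA⟩ := exists_normal_resolvent hA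
  have hR : IsResolvent R := ⟨hRn, hRi⟩
  have hcl : closure (Set.Ioo 0 τ) = Set.Icc 0 τ := closure_Ioo hτ.ne
  have hM (x : ℝ) : ∃ T : H →L[ℂ] H, x ∈ Set.Icc 0 τ →
      ∀ u, Tendsto (fun s => opOf R (kern τ 0 s) u) (𝓝[Set.Ioo 0 τ] x) (𝓝 (T u)) := by
    by_cases hx : x ∈ Set.Icc 0 τ
    · rw [← hcl] at hx
      have : (𝓝[Set.Ioo 0 τ] x).NeBot := mem_closure_iff_nhdsWithin_neBot.1 hx
      choose f hf using exists_tendsto_opOf_kern hR hd hx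
      exact ⟨continuousLinearMapOfTendsto (fun s => opOf R (kern τ 0 s)) (tendsto_pi_nhds.2 hf),
        fun _ => hf⟩
    · exact ⟨0, fun h => absurd h hx⟩
  choose M hM using hM
  have hcont (u : H) : ContinuousOn (fun x => opOf R (kern τ 0 x) u) (Set.Ioo 0 τ) :=
    (uniformContinuousOn_opOf_kern hR hd u).continuousOn
  have hMF {x : ℝ} (hx : x ∈ Set.Ioo 0 τ) (u : H) : M x u = opOf R (kern τ 0 x) u := by
    have : (𝓝[Set.Ioo 0 τ] x).NeBot := mem_closure_iff_nhdsWithin_neBot.1 (subset_closure hx)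
    exact tendsto_nhds_unique (hM x (Set.Ioo_subset_Icc_self hx) u) (hcont u x hx)
  have hsum (u : H) : M 0 u + M τ u = u := by
    have hdense : (fun u => M 0 u + M τ u) = id := by
      refine hd.equalizer (by fun_prop) continuous_id (funext fun v => ?_)
      have t0 : Tendsto (fun s : ℝ => s) (𝓝[>] 0) (𝓝[Set.Ioo 0 τ] 0) := by
        rw [nhdsWithin_Ioo_eq_nhdsGT hτ]
        exact tendsto_id
      have tτ : Tendsto (fun s : ℝ => τ - s) (𝓝[>] 0) (𝓝[Set.Ioo 0 τ] τ) := by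
        refine tendsto_nhdsWithin_iff.2 ⟨?_, ?_⟩
        · have : ContinuousAt (fun s : ℝ => τ - s) 0 := by fun_prop
          simpa [ContinuousAt] using this.tendsto.mono_left nhdsWithin_le_nhds
        · filter_upwards [Ioo_mem_nhdsGT hτ] with s hs
          exact ⟨by linarith [hs.2], by linarith [hs.1]⟩
      have hlim := ((hM 0 (Set.left_mem_Icc.2 hτ.le) (R v)).comp t0).add
        ((hM τ (Set.right_mem_Icc.2 hτ.le) (R v)).comp tτ)
      have hlim' : Tendsto (fun s => opOf R (kern τ 0 s) (R v) + opOf R (kern τ 0 (τ - s)) (R v))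
          (𝓝[>] 0) (𝓝 (R v)) := by
        rw [tendsto_iff_norm_sub_tendsto_zero]
        refine squeeze_zero' (g := fun s => 4 * s * ‖v‖)
          (Eventually.of_forall fun _ => norm_nonneg _) ?_ ?_
        · filter_upwards [Ioo_mem_nhdsGT hτ] with s hs
          exact ContinuousLinearMap.le_of_opNorm_le _ (norm_opOf_kern_add_sub_le hR hs) v
        · have : ContinuousAt (fun s : ℝ => 4 * s * ‖v‖) 0 := by fun_prop
          simpa [ContinuousAt] using this.tendsto.mono_left nhdsWithin_le_nhds
      exact tendsto_nhds_unique hlim hlim'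
    exact congrFun hdense u
  refine ⟨M, fun u => ⟨?_, hsum u, fun x => -opOf R (kern τ 1 x) u, ?_, fun x hx => ⟨?_, ?_⟩⟩⟩
  · have h := continuousOn_extendFrom (f := fun x => opOf R (kern τ 0 x) u) hcl.ge
      fun x hx => ⟨_, hM x hx u⟩
    exact h.congr fun x hx => (extendFrom_eq (hcl.ge hx) (hM x hx u)).symm
  · intro x hx
    have h := (hasDerivAt_opOf_kern hR hx 1).continuousAt
    exact ((h.clm_apply continuousAt_const).neg).continuousWithinAt
  · have h := ((ContinuousLinearMap.apply ℂ H u).restrictScalars ℝ).hasFDerivAt.comp_hasDerivAt x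
      (hasDerivAt_opOf_kern hR hx 0)
    refine HasDerivAt.congr_of_eventuallyEq h ?_
    filter_upwards [isOpen_Ioo.mem_nhds hx] with y hy
    exact hMF hy u
  · have d0 := decays_kern hx 0
    have d1 := decays_kern hx 1
    have e : R (opOf R (fun t => kern τ 1 x t + Complex.I * kern τ 0 x t) u) = M x u := by
      rw [hMF hx u, ← mul_opOf hR (d1.add_mul d0 Complex.I) (g := kern τ 0 x) fun t => by
        unfold kern
        push_cast
        ring]
      rfl
    obtain ⟨hmem, hAR⟩ := hRA (opOf R (fun t => kern τ 1 x t + Complex.I * kern τ 0 x t) u)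
    have hmem' : M x u ∈ A.domain := e ▸ hmem
    have hAM : A ⟨M x u, hmem'⟩ + Complex.I • M x u =
        opOf R (kern τ 1 x) u + Complex.I • M x u := by
      simp only [e] at hAR
      rw [hAR, opOf_add_smul hR d1 d0, hMF hx u]
      rfl
    exact ⟨hmem', by rw [add_zero, add_right_cancel hAM]⟩

end SelfAdjointPMap

namespace IsSignatureOperator

variable {J : H →L[ℂ] H}

theorem apply_apply (hJ : IsSignatureOperator J) (x : H) : J (J x) = x :=
  DFunLike.congr_fun hJ.2 x

theorem inner_apply (hJ : IsSignatureOperator J) (x y : H) : ⟪J x, y⟫_ℂ = ⟪x, J y⟫_ℂ := by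
  rw [← ContinuousLinearMap.adjoint_inner_right, hJ.1.adjoint_eq]

end IsSignatureOperator

namespace BoundaryValue

variable {J : H →L[ℂ] H} {L : H →ₗ.[ℂ] H} {τ : ℝ}

/-- The indefinite energy `[u, u] = ⟨J u, u⟩`. -/
def energy (J : H →L[ℂ] H) (u : H) : ℝ := (⟪J u, u⟫_ℂ).re

theorem energy_eq_of_Pplus_eq_zero {u : H} (h : Pplus J u = 0) : energy J u = -‖u‖ ^ 2 := by
  have h1 : u + J u = 0 := 
    (smul_eq_zero.1 (show (2⁻¹ : ℂ) • (u + J u) = 0 from h)).resolve_left (by norm_num)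
  rw [energy, eq_neg_of_add_eq_zero_right h1, inner_neg_left, Complex.neg_re,
    ← @inner_self_eq_norm_sq ℂ]
  rfl

theorem energy_eq_of_Pminus_eq_zero {u : H} (h : Pminus J u = 0) : energy J u = ‖u‖ ^ 2 := by
  have h1 : u - J u = 0 := 
    (smul_eq_zero.1 (show (2⁻¹ : ℂ) • (u - J u) = 0 from h)).resolve_left (by norm_num)
  rw [energy, ← sub_eq_zero.1 h1, ← @inner_self_eq_norm_sq ℂ]
  rfl

theorem continuousOn_energy {ψ : ℝ → H} {s : Set ℝ} (h : ContinuousOn ψ s) :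
    ContinuousOn (fun x => energy J (ψ x)) s :=
  Complex.continuous_re.comp_continuousOn ((J.continuous.comp_continuousOn h).inner h)

theorem hasDerivAt_energy (hJ : IsSignatureOperator J) {ψ : ℝ → H} {x : ℝ}
    (hx : ψ x ∈ L.domain) (h : HasDerivAt ψ (-(J (L ⟨ψ x, hx⟩))) x) :
    HasDerivAt (fun s => energy J (ψ s)) (-2 * (⟪L ⟨ψ x, hx⟩, ψ x⟫_ℂ).re) x := by
  have h1 := ((J.restrictScalars ℝ).hasFDerivAt.comp_hasDerivAt x h).inner ℂ h
  have h2 := Complex.reCLM.hasFDerivAt.comp_hasDerivAt x h1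
  refine h2.congr_deriv ?_
  change (⟪J (ψ x), -(J (L ⟨ψ x, hx⟩))⟫_ℂ + ⟪J (-(J (L ⟨ψ x, hx⟩))), ψ x⟫_ℂ).re = _
  rw [map_neg, hJ.apply_apply, inner_neg_right, inner_neg_left, hJ.inner_apply, hJ.apply_apply,
    ← inner_conj_symm (ψ x)]
  simp only [Complex.add_re, Complex.neg_re, Complex.conj_re]
  ring

theorem inner_nonneg_of_isPositivePMap (hL : IsPositivePMap L) (h : L.domain) :
    0 ≤ (⟪L h, (h : H)⟫_ℂ).re := by
  by_cases h0 : (h : H) = 0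
  · simp [h0]
  · exact (Complex.lt_def.1 (hL h h0)).1.le

theorem eq_zero_of_inner_eq_zero (hL : IsPositivePMap L) {h : L.domain}
    (h0 : (⟪L h, (h : H)⟫_ℂ).re = 0) : (h : H) = 0 := by
  by_contra hne
  have := (Complex.lt_def.1 (hL h hne)).1
  rw [h0] at this
  exact lt_irrefl _ this

/-- The energy of a strong solution and the derivative of the energy. -/
theorem exists_hasDerivAt_energy (hJ : IsSignatureOperator J) {ψ : ℝ → H}
    (h : IsStrongSolutionOn (pmapComp J L) (fun _ => 0) ψ (Set.Ioo 0 τ)) {x : ℝ}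
    (hx : x ∈ Set.Ioo 0 τ) : ∃ hd : ψ x ∈ L.domain,
      HasDerivAt (fun s => energy J (ψ s)) (-2 * (⟪L ⟨ψ x, hd⟩, ψ x⟫_ℂ).re) x := by
  obtain ⟨ψ', -, h⟩ := h
  obtain ⟨h1, hd, h2⟩ := h x hx
  refine ⟨hd, hasDerivAt_energy (L := L) hJ hd (h1.congr_deriv ?_)⟩
  rw [h2]
  exact add_zero _

theorem antitoneOn_energy (hJ : IsSignatureOperator J) (hL : IsPositivePMap L) {ψ : ℝ → H}
    (hc : ContinuousOn ψ (Set.Icc 0 τ))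
    (h : IsStrongSolutionOn (pmapComp J L) (fun _ => 0) ψ (Set.Ioo 0 τ)) :
    AntitoneOn (fun x => energy J (ψ x)) (Set.Icc 0 τ) := by
  refine antitoneOn_of_deriv_nonpos (convex_Icc 0 τ) (continuousOn_energy hc) ?_ ?_
  · rw [interior_Icc]
    intro x hx
    obtain ⟨_, hd⟩ := exists_hasDerivAt_energy hJ h hx
    exact hd.differentiableAt.differentiableWithinAt
  · rw [interior_Icc]
    intro x hx
    obtain ⟨hm, hd⟩ := exists_hasDerivAt_energy hJ h hx
    rw [hd.deriv]
    linarith [inner_nonneg_of_isPositivePMap hL ⟨ψ x, hm⟩]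

theorem eq_zero_of_homogeneous (hJ : IsSignatureOperator J) (hL : IsPositivePMap L) (hτ : 0 < τ)
    {ψ : ℝ → H} (hc : ContinuousOn ψ (Set.Icc 0 τ))
    (h : IsStrongSolutionOn (pmapComp J L) (fun _ => 0) ψ (Set.Ioo 0 τ))
    (h0 : Pplus J (ψ 0) = 0) (h1 : Pminus J (ψ τ) = 0) : ∀ x ∈ Set.Icc 0 τ, ψ x = 0 := by
  have hanti := antitoneOn_energy hJ hL hc h
  have hE (x : ℝ) (hx : x ∈ Set.Icc 0 τ) : energy J (ψ x) = 0 := by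
    have a := hanti (Set.left_mem_Icc.2 hτ.le) hx hx.1
    have b := hanti hx (Set.right_mem_Icc.2 hτ.le) hx.2
    simp only [energy_eq_of_Pplus_eq_zero h0] at a
    simp only [energy_eq_of_Pminus_eq_zero h1] at b
    nlinarith [sq_nonneg ‖ψ 0‖, sq_nonneg ‖ψ τ‖]
  have hzero : Set.EqOn ψ (fun _ => 0) (Set.Ioo 0 τ) := by
    intro x hx
    obtain ⟨hm, hd⟩ := exists_hasDerivAt_energy hJ h hx
    have hd' : HasDerivAt (fun s => energy J (ψ s)) 0 x := by
      refine (hasDerivAt_const x (0 : ℝ)).congr_of_eventuallyEq ?_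
      filter_upwards [isOpen_Ioo.mem_nhds hx] with y hy
      exact hE y (Set.Ioo_subset_Icc_self hy)
    have := hd.unique hd'
    exact eq_zero_of_inner_eq_zero hL (h := ⟨ψ x, hm⟩) (by linarith)
  exact hzero.of_subset_closure hc continuousOn_const Set.Ioo_subset_Icc_self
    (closure_Ioo hτ.ne).ge

theorem sub_isStrongSolutionOn {B : H →ₗ.[ℂ] H} {ψ₁ ψ₂ : ℝ → H} {s : Set ℝ}
    (h₁ : IsStrongSolutionOn B (fun _ => 0) ψ₁ s) (h₂ : IsStrongSolutionOn B (fun _ => 0) ψ₂ s) :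
    IsStrongSolutionOn B (fun _ => 0) (fun x => ψ₁ x - ψ₂ x) s := by
  obtain ⟨ψ₁', c₁, h₁⟩ := h₁
  obtain ⟨ψ₂', c₂, h₂⟩ := h₂
  refine ⟨fun x => ψ₁' x - ψ₂' x, c₁.sub c₂, fun x hx => ?_⟩
  obtain ⟨d₁, m₁, e₁⟩ := h₁ x hx
  obtain ⟨d₂, m₂, e₂⟩ := h₂ x hx
  refine ⟨d₁.sub d₂, B.domain.sub_mem m₁ m₂, ?_⟩
  have e : B ⟨ψ₁ x - ψ₂ x, B.domain.sub_mem m₁ m₂⟩ = B ⟨ψ₁ x, m₁⟩ - B ⟨ψ₂ x, m₂⟩ :=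
    B.map_sub ⟨ψ₁ x, m₁⟩ ⟨ψ₂ x, m₂⟩
  change ψ₁' x - ψ₂' x = -(B ⟨ψ₁ x - ψ₂ x, B.domain.sub_mem m₁ m₂⟩) + 0
  rw [e₁, e₂, e]
  abel

/-- Solutions of `ψ' = -B ψ`, `ψ 0 + ψ τ = u` for `B` similar to a self-adjoint operator. -/
theorem exists_antiperiodic_solution {B : H →ₗ.[ℂ] H} (hB : SimilarToSelfAdjoint B)
    (hτ : 0 < τ) :
    ∃ M : ℝ → H →L[ℂ] H, ∀ u, ContinuousOn (fun x => M x u) (Set.Icc 0 τ) ∧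
      M 0 u + M τ u = u ∧ IsStrongSolutionOn B (fun _ => 0) (fun x => M x u) (Set.Ioo 0 τ) := by
  obtain ⟨S, A, hA, hdom, hAS⟩ := hB
  obtain ⟨N, hN⟩ := SelfAdjointPMap.exists_antiperiodic_solution hA hτ
  let T : H →L[ℂ] H := S.symm
  refine ⟨fun x => T.comp ((N x).comp (S : H →L[ℂ] H)), fun u => ?_⟩
  obtain ⟨hc, hsum, ψ', hψc, hψ⟩ := hN (S u)
  refine ⟨T.continuous.comp_continuousOn hc, ?_, fun x => T (ψ' x),
    T.continuous.comp_continuousOn hψc, fun x hx => ?_⟩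
  · change T (N 0 (S u)) + T (N τ (S u)) = u
    rw [← map_add, hsum]
    exact S.symm_apply_apply u
  · obtain ⟨hd, hm, he⟩ := hψ x hx
    refine ⟨(T.restrictScalars ℝ).hasFDerivAt.comp_hasDerivAt x hd, ?_⟩
    have hm' : N x (S u) ∈ (fun h => S h) '' (B.domain : Set H) := hdom ▸ hm
    obtain ⟨b, hb, hbN⟩ := hm'
    replace hbN : S b = N x (S u) := hbN
    replace he : ψ' x = -(A ⟨N x (S u), hm⟩) + 0 := he
    have hTb : T (N x (S u)) = b := by
      rw [← hbN]
      exact S.symm_apply_apply b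
    have hAb := hAS ⟨b, hb⟩ (by rw [hbN]; exact hm)
    simp only [hbN] at hAb
    refine ⟨show T (N x (S u)) ∈ B.domain from hTb ▸ hb, ?_⟩
    change T (ψ' x) = -(B ⟨T (N x (S u)), _⟩) + 0
    rw [he, hAb, add_zero, add_zero, map_neg]
    change -(S.symm (S _)) = -(B ⟨T (N x (S u)), _⟩)
    rw [S.symm_apply_apply]
    simp only [hTb]

theorem surjective_of_coercive (V : H →L[ℂ] H) {c : ℝ} (hc : 0 < c)
    (hV : ∀ u, c * ‖u‖ ^ 2 ≤ (⟪V u, u⟫_ℂ).re) : Function.Surjective V := by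
  have hbelow (u : H) : c * ‖u‖ ≤ ‖V u‖ := by
    have h : c * ‖u‖ ^ 2 ≤ ‖V u‖ * ‖u‖ :=
      (hV u).trans ((Complex.re_le_norm _).trans (norm_inner_le_norm _ _))
    by_contra! hlt
    have hu : 0 < ‖u‖ := by
      by_contra! hu
      have : ‖u‖ = 0 := le_antisymm hu (norm_nonneg _)
      rw [this, mul_zero] at hlt
      exact absurd (norm_nonneg (V u)) (not_le.2 hlt)
    nlinarith
  have hanti : AntilipschitzWith (c⁻¹).toNNReal V := by
    refine V.antilipschitz_of_bound fun u => ?_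
    rw [Real.coe_toNNReal _ (inv_pos.2 hc).le, inv_mul_eq_div, le_div_iff₀ hc, mul_comm]
    exact hbelow u
  have hclosed : IsClosed (V.range : Set H) := hanti.isClosed_range V.uniformContinuous
  have := hclosed.completeSpace_coe
  have htop : V.range = ⊤ := by
    rw [← Submodule.orthogonal_eq_bot_iff, Submodule.eq_bot_iff]
    intro w hw
    have h0 : ⟪V w, w⟫_ℂ = 0 :=
      Submodule.inner_right_of_mem_orthogonal (LinearMap.mem_range.2 ⟨w, rfl⟩) hw
    have h := hV w
    rw [h0, Complex.zero_re] at h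
    have : ‖w‖ ^ 2 = 0 := by nlinarith [sq_nonneg ‖w‖]
    simpa using this
  exact LinearMap.range_eq_top.1 htop

/-- If `a = ψ 0`, `b = ψ τ` have decreasing energy, then `P₊ a + P₋ b` is coercive
in `a + b`. -/
theorem coercive_boundary (hJ : IsSignatureOperator J) {a b : H} (h : energy J b ≤ energy J a) :
    2⁻¹ * ‖a + b‖ ^ 2 ≤ (⟪Pplus J a + Pminus J b, a + b⟫_ℂ).re := by
  have e : Pplus J a + Pminus J b = (2⁻¹ : ℂ) • ((a + b) + (J a - J b)) := by
    change (2⁻¹ : ℂ) • (a + J a) + (2⁻¹ : ℂ) • (b - J b) = _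
    module
  have e1 : (⟪J a, b⟫_ℂ).re = (⟪J b, a⟫_ℂ).re := by
    rw [hJ.inner_apply, ← inner_conj_symm, Complex.conj_re]
  have e2 : (⟪a + b, a + b⟫_ℂ).re = ‖a + b‖ ^ 2 := @inner_self_eq_norm_sq ℂ H _ _ _ (a + b)
  have e3 : (starRingEnd ℂ) (2⁻¹ : ℂ) = ((2⁻¹ : ℝ) : ℂ) := by
    rw [map_inv₀, map_ofNat]
    push_cast
    rfl
  rw [e, inner_smul_left, e3, Complex.re_ofReal_mul, inner_add_left, Complex.add_re, e2,
    inner_sub_left, inner_add_right, inner_add_right]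
  simp only [Complex.sub_re, Complex.add_re]
  unfold energy at h
  linarith

theorem Pplus_eq_of_add_eq (hJ : IsSignatureOperator J) {a b φp φm : H} (hp : J φp = φp)
    (hm : J φm = -φm) (h : Pplus J a + Pminus J b = φp + φm) :
    Pplus J a = φp ∧ Pminus J b = φm := by
  have hPa : J (Pplus J a) = Pplus J a := by
    change J ((2⁻¹ : ℂ) • (a + J a)) = (2⁻¹ : ℂ) • (a + J a)
    rw [map_smul, map_add, hJ.apply_apply, add_comm]
  have hPb : J (Pminus J b) = -Pminus J b := by
    change J ((2⁻¹ : ℂ) • (b - J b)) = -((2⁻¹ : ℂ) • (b - J b))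
    rw [map_smul, map_sub, hJ.apply_apply, ← smul_neg, neg_sub]
  have h' := congrArg J h
  rw [map_add, map_add, hPa, hPb, hp, hm] at h'
  have h2 : (2 : ℂ) • Pplus J a = (2 : ℂ) • φp := by
    calc (2 : ℂ) • Pplus J a
        = (Pplus J a + Pminus J b) + (Pplus J a + -Pminus J b) := by module
      _ = (φp + φm) + (φp + -φm) := by rw [h, h']
      _ = (2 : ℂ) • φp := by module
  have h3 : Pplus J a = φp := smul_right_injective H (two_ne_zero : (2 : ℂ) ≠ 0) h2
  rw [h3] at h
  exact ⟨h3, add_left_cancel h⟩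

end BoundaryValue

/-- If `L = L* > 0` is densely defined and `B = JL` is similar to a
self-adjoint operator, then for all `φ₊ ∈ H₊`, `φ₋ ∈ H₋` and `0 < τ < ∞` the boundary value
problem `dψ/dx = -Bψ` on `(0,τ)`, `P₊ψ(0) = φ₊`, `P₋ψ(τ) = φ₋` has a unique strong solution. -/
theorem statement0 (J : H →L[ℂ] H) (hJ : IsSignatureOperator J)
    (L : H →ₗ.[ℂ] H) (hdense : Dense (L.domain : Set H))
    (hLsa : IsSelfAdjoint L) (hLpos : IsPositivePMap L)
    (hsim : SimilarToSelfAdjoint (pmapComp J L))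
    (τ : ℝ) (hτ : 0 < τ)
    (φp φm : H) (hφp : J φp = φp) (hφm : J φm = -φm) :
    (∃ ψ : ℝ → H,
        ContinuousOn ψ (Set.Icc 0 τ) ∧
        IsStrongSolutionOn (pmapComp J L) (fun _ => 0) ψ (Set.Ioo 0 τ) ∧
        Pplus J (ψ 0) = φp ∧ Pminus J (ψ τ) = φm) ∧
    (∀ ψ₁ ψ₂ : ℝ → H,
        (ContinuousOn ψ₁ (Set.Icc 0 τ) ∧
          IsStrongSolutionOn (pmapComp J L) (fun _ => 0) ψ₁ (Set.Ioo 0 τ) ∧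
          Pplus J (ψ₁ 0) = φp ∧ Pminus J (ψ₁ τ) = φm) →
        (ContinuousOn ψ₂ (Set.Icc 0 τ) ∧
          IsStrongSolutionOn (pmapComp J L) (fun _ => 0) ψ₂ (Set.Ioo 0 τ) ∧
          Pplus J (ψ₂ 0) = φp ∧ Pminus J (ψ₂ τ) = φm) →
        Set.EqOn ψ₁ ψ₂ (Set.Icc 0 τ)) := by
  refine ⟨?_, fun ψ₁ ψ₂ ⟨c₁, s₁, p₁, m₁⟩ ⟨c₂, s₂, p₂, m₂⟩ x hx => ?_⟩
  · obtain ⟨M, hM⟩ := BoundaryValue.exists_antiperiodic_solution hsim hτ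
    have hcoer (u : H) :
        2⁻¹ * ‖u‖ ^ 2 ≤ (⟪((Pplus J).comp (M 0) + (Pminus J).comp (M τ)) u, u⟫_ℂ).re := by
      obtain ⟨hc, hsum, hs⟩ := hM u
      have h := BoundaryValue.coercive_boundary hJ (BoundaryValue.antitoneOn_energy hJ hLpos hc hs
        (Set.left_mem_Icc.2 hτ.le) (Set.right_mem_Icc.2 hτ.le) hτ.le)
      rwa [hsum] at h
    obtain ⟨u, hu⟩ := BoundaryValue.surjective_of_coercive _ (by norm_num) hcoer (φp + φm)
    obtain ⟨hc, -, hs⟩ := hM u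
    exact ⟨fun x => M x u, hc, hs, BoundaryValue.Pplus_eq_of_add_eq hJ hφp hφm hu⟩
  · refine sub_eq_zero.1 (BoundaryValue.eq_zero_of_homogeneous hJ hLpos hτ (c₁.sub c₂)
      (BoundaryValue.sub_isStrongSolutionOn s₁ s₂) ?_ ?_ x hx)
    · rw [Pi.sub_apply, map_sub, p₁, p₂, sub_self]
    · rw [Pi.sub_apply, map_sub, m₁, m₂, sub_self]

end
end

section
/- Let H be a complex Hilbert space, J a signature operator on H, L a densely defined positive self-adjoint operator in H, and B := JL. Assume B is similar to a self-adjoint operator in H. Then for every φ₊ ∈ H₊ there exists a unique function ψ : [0, ∞) → H which is continuous on [0, ∞), continuously differentiable on (0, ∞), satisfies ψ(x) ∈ dom B and ψ′(x) = −Bψ(x) for all x > 0, satisfies P₊ψ(0) = φ₊, and is bounded: sup_{x ≥ 0} ‖ψ(x)‖ < ∞. -/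
open scoped ComplexOrder InnerProductSpace

noncomputable section

variable {H : Type*} [NormedAddCommGroup H] [InnerProductSpace ℂ H] [CompleteSpace H]

theorem LinearPMap.inner_apply_eq_of_isSelfAdjoint {A : H →ₗ.[ℂ] H} (hA : IsSelfAdjoint A)
    (x y : A.domain) : ⟪A x, (y : H)⟫_ℂ = ⟪(x : H), A y⟫_ℂ := by
  have h := LinearPMap.adjoint_isFormalAdjoint hA.dense_domain
  rw [LinearPMap.isSelfAdjoint_def.mp hA] at h
  exact h x y

theorem exists_graph_decomposition {A : H →ₗ.[ℂ] H} (hA : IsSelfAdjoint A) :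
    ∃ Q D : H →L[ℂ] H, (∀ h, (Q h, D h) ∈ A.graph) ∧ ∀ h, (D h, h - Q h) ∈ A.graph := by
  let e := WithLp.prodContinuousLinearEquiv 2 ℂ H H
  let G : Submodule ℂ (WithLp 2 (H × H)) := A.graph.comap (e : WithLp 2 (H × H) →ₗ[ℂ] H × H)
  have hmem : ∀ p, p ∈ G ↔ e p ∈ A.graph := fun p => Iff.rfl
  have hG : IsClosed (G : Set (WithLp 2 (H × H))) :=
    hA.isClosed.preimage e.continuous
  have : CompleteSpace G := hG.completeSpace_coe
  let P : H →L[ℂ] H × H := (e : WithLp 2 (H × H) →L[ℂ] H × H) ∘L G.starProjection ∘L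
    (e.symm : H × H →L[ℂ] WithLp 2 (H × H)) ∘L ContinuousLinearMap.inl ℂ H H
  refine ⟨ContinuousLinearMap.fst ℂ H H ∘L P, ContinuousLinearMap.snd ℂ H H ∘L P,
    fun h => ?_, fun h => ?_⟩
  · exact (hmem _).1 (G.starProjection_apply_mem (e.symm (h, 0)))
  · have hadj : A.graph = A.graph.adjoint := by
      conv_lhs => rw [← LinearPMap.isSelfAdjoint_def.mp hA]
      exact LinearPMap.adjoint_graph_eq_graph_adjoint hA.dense_domain
    rw [hadj, Submodule.mem_adjoint_iff]
    intro a b hab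
    have h1 := G.sub_starProjection_mem_orthogonal (e.symm (h, 0))
    have h2 := (Submodule.mem_orthogonal _ _).1 h1 (e.symm (a, b)) (by simpa [hmem] using hab)
    simp only [WithLp.prod_inner_apply] at h2
    have h3 : ⟪a, h - (P h).1⟫_ℂ + ⟪b, 0 - (P h).2⟫_ℂ = 0 := h2
    rw [zero_sub, inner_neg_right] at h3
    change ⟪b, (P h).2⟫_ℂ - ⟪a, h - (P h).1⟫_ℂ = 0
    linear_combination -h3

/-- The bounded operators `Q = (1 + A²)⁻¹` and `D = A (1 + A²)⁻¹` attached to an injective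
self-adjoint operator `A`. -/
structure IsResolventPair (A : H →ₗ.[ℂ] H) (Q D : H →L[ℂ] H) : Prop where
  isSelfAdjoint_fst : IsSelfAdjoint Q
  isSelfAdjoint_snd : IsSelfAdjoint D
  mem_graph : ∀ h, (Q h, D h) ∈ A.graph
  apply_map : ∀ w : A.domain, Q (A w) = D w
  mul_self_snd : D * D = Q - Q * Q
  commute : Commute Q D
  injective_fst : ∀ h, Q h = 0 → h = 0
  injective_snd : ∀ h, D h = 0 → h = 0

theorem exists_isResolventPair {A : H →ₗ.[ℂ] H} (hA : IsSelfAdjoint A)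
    (hinj : ∀ w : A.domain, A w = 0 → (w : H) = 0) : ∃ Q D : H →L[ℂ] H, IsResolventPair A Q D := by
  obtain ⟨Q, D, hQ, hD⟩ := exists_graph_decomposition hA
  have hsymm : ∀ {a b c d : H}, (a, b) ∈ A.graph → (c, d) ∈ A.graph → ⟪b, c⟫_ℂ = ⟪a, d⟫_ℂ := by
    intro a b c d hab hcd
    obtain ⟨x, rfl, rfl⟩ := A.mem_graph_iff.1 hab
    obtain ⟨y, rfl, rfl⟩ := A.mem_graph_iff.1 hcd
    exact LinearPMap.inner_apply_eq_of_isSelfAdjoint hA x y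
  have hQs : ∀ h k, ⟪Q h, k⟫_ℂ = ⟪h, Q k⟫_ℂ := by
    intro h k
    have h1 := hsymm (hQ h) (hD k)
    have h2 := hsymm (hD h) (hQ k)
    rw [inner_sub_right] at h1
    rw [inner_sub_left] at h2
    linear_combination -h1 - h2
  have hDs : ∀ h k, ⟪D h, k⟫_ℂ = ⟪h, D k⟫_ℂ := by
    intro h k
    have h1 := hsymm (hQ h) (hQ k)
    have h2 := hsymm (hD h) (hD k)
    rw [inner_sub_right, inner_sub_left] at h2
    linear_combination h1 - h2
  have hQA : ∀ {a b : H}, (a, b) ∈ A.graph → Q b = D a := by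
    intro a b hab
    refine ext_inner_right ℂ fun k => ?_
    rw [hQs, hDs, hsymm hab (hQ k)]
  have hA0 : ∀ {a : H}, (a, (0 : H)) ∈ A.graph → a = 0 := by
    intro a ha
    obtain ⟨x, hx, hx'⟩ := A.mem_graph_iff.1 ha
    exact hx.symm.trans (hinj x hx')
  have hQinj : ∀ h, Q h = 0 → h = 0 := by
    intro h hh
    have h2 := hQ h
    rw [hh] at h2
    have h3 : D h = 0 := A.graph_fst_eq_zero_snd h2 rfl
    have h4 := hD h
    rw [h3, hh, sub_zero] at h4
    exact A.graph_fst_eq_zero_snd h4 rfl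
  refine ⟨Q, D, ?_, ?_, hQ, fun w => hQA (A.mem_graph w), ?_, ?_, hQinj, ?_⟩
  · exact ContinuousLinearMap.isSelfAdjoint_iff_isSymmetric.2 fun h k => hQs h k
  · exact ContinuousLinearMap.isSelfAdjoint_iff_isSymmetric.2 fun h k => hDs h k
  · ext h
    have h1 := hQA (hD h)
    rw [map_sub] at h1
    simpa using h1.symm
  · ext h
    exact hQA (hQ h)
  · intro h hh
    have h1 := hQ h
    rw [hh] at h1
    exact hQinj h (hA0 h1)

theorem IsResolventPair.spectrum_subset {A : H →ₗ.[ℂ] H} {Q D : H →L[ℂ] H}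
    (h : IsResolventPair A Q D) : spectrum ℝ Q ⊆ Set.Icc 0 1 := by
  have hQ := h.isSelfAdjoint_fst
  have h1 : cfc (fun q : ℝ => q - q * q) Q = D * D := by
    rw [h.mul_self_snd, cfc_sub _ _ Q, cfc_mul _ _ Q, cfc_id' ℝ Q]
  have h2 : 0 ≤ cfc (fun q : ℝ => q - q * q) Q := by
    rw [h1]
    exact h.isSelfAdjoint_snd.mul_self_nonneg
  have h3 := (cfc_nonneg_iff (fun q : ℝ => q - q * q) Q).1 h2
  intro q hq
  have h4 := h3 q hq
  constructor <;> nlinarith [h4]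

/-- A continuous real function on the half-line `[0, ∞)` vanishing at infinity. -/
def VanishesAtTop (f : ℝ → ℝ) : Prop := Continuous f ∧ Filter.Tendsto f Filter.atTop (nhds 0)

/-- The function `f (√(q⁻¹ - 1))` of `q`, extended by `0` at `q = 0`. -/
def invSqrtLift (f : ℝ → ℝ) : ℝ → ℝ := Function.update (fun q => f √(q⁻¹ - 1)) 0 0

theorem invSqrtLift_zero (f : ℝ → ℝ) : invSqrtLift f 0 = 0 := Function.update_self ..

theorem invSqrtLift_of_ne {q : ℝ} (hq : q ≠ 0) (f : ℝ → ℝ) : invSqrtLift f q = f √(q⁻¹ - 1) :=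
  Function.update_of_ne hq ..

theorem VanishesAtTop.continuousOn_invSqrtLift {f : ℝ → ℝ} (hf : VanishesAtTop f) :
    ContinuousOn (invSqrtLift f) (Set.Icc 0 1) := by
  rw [invSqrtLift, continuousOn_update_iff]
  constructor
  · refine hf.1.comp_continuousOn (Real.continuous_sqrt.comp_continuousOn ?_)
    exact (continuousOn_inv₀.mono fun q hq => hq.2).sub continuousOn_const
  · intro _
    refine hf.2.comp (Real.tendsto_sqrt_atTop.comp ?_)
    refine Filter.tendsto_atTop_add_const_right _ (-1) ?_
    refine tendsto_inv_nhdsGT_zero.mono_left (nhdsWithin_mono _ ?_)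
    rintro q ⟨hq, hq0⟩
    exact lt_of_le_of_ne hq.1 (Ne.symm hq0)

/-- For `Q = (1 + A²)⁻¹`, the operator `f(|A|)`. -/
def absCalculus (Q : H →L[ℂ] H) (f : ℝ → ℝ) : H →L[ℂ] H := cfc (invSqrtLift f) Q

namespace IsResolventPair

variable {A : H →ₗ.[ℂ] H} {Q D : H →L[ℂ] H} (h : IsResolventPair A Q D) {f g k : ℝ → ℝ}
include h

theorem continuousOn (hf : VanishesAtTop f) : ContinuousOn (invSqrtLift f) (spectrum ℝ Q) :=
  hf.continuousOn_invSqrtLift.mono h.spectrum_subset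

theorem absCalculus_mul (hf : VanishesAtTop f) (hg : VanishesAtTop g)
    (hk : ∀ m, 0 ≤ m → f m * g m = k m) :
    absCalculus Q f * absCalculus Q g = absCalculus Q k := by
  rw [absCalculus, absCalculus, ← cfc_mul _ _ Q (h.continuousOn hf) (h.continuousOn hg)]
  refine cfc_congr fun q _ => ?_
  rcases eq_or_ne q 0 with rfl | hq
  · simp [invSqrtLift_zero]
  · simp [invSqrtLift_of_ne hq, hk]

theorem absCalculus_sub (hf : VanishesAtTop f) (hg : VanishesAtTop g) :
    absCalculus Q (fun m => f m - g m) = absCalculus Q f - absCalculus Q g := by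
  rw [absCalculus, absCalculus, absCalculus,
    ← cfc_sub _ _ Q (h.continuousOn hf) (h.continuousOn hg)]
  refine cfc_congr fun q _ => ?_
  rcases eq_or_ne q 0 with rfl | hq
  · simp [invSqrtLift_zero]
  · simp [invSqrtLift_of_ne hq]

theorem absCalculus_const_mul (c : ℝ) (hf : VanishesAtTop f) :
    absCalculus Q (fun m => c * f m) = c • absCalculus Q f := by
  rw [absCalculus, absCalculus, ← cfc_smul _ _ Q (h.continuousOn hf)]
  refine cfc_congr fun q _ => ?_
  rcases eq_or_ne q 0 with rfl | hq
  · simp [invSqrtLift_zero]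
  · simp [invSqrtLift_of_ne hq]

theorem absCalculus_inv : absCalculus Q (fun m => (1 + m ^ 2)⁻¹) = Q := by
  have hQ := h.isSelfAdjoint_fst
  conv_rhs => rw [← cfc_id' ℝ Q]
  refine cfc_congr fun q hq => ?_
  rcases eq_or_ne q 0 with rfl | hq0
  · simp [invSqrtLift_zero]
  · have h1 := h.spectrum_subset hq
    have h2 : 0 < q := lt_of_le_of_ne h1.1 (Ne.symm hq0)
    have h3 : 1 ≤ q⁻¹ := (one_le_inv₀ h2).2 h1.2
    simp [invSqrtLift_of_ne hq0, Real.sq_sqrt (sub_nonneg.2 h3)]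

theorem absCalculus_commute_snd (f : ℝ → ℝ) : Commute (absCalculus Q f) D :=
  h.commute.cfc_real _

end IsResolventPair

theorem isSelfAdjoint_absCalculus (Q : H →L[ℂ] H) (f : ℝ → ℝ) : IsSelfAdjoint (absCalculus Q f) :=
  cfc_predicate _ _

theorem absCalculus_commute (Q : H →L[ℂ] H) (f g : ℝ → ℝ) :
    Commute (absCalculus Q f) (absCalculus Q g) :=
  cfc_commute_cfc _ _ _

theorem norm_absCalculus_le (Q : H →L[ℂ] H) {f : ℝ → ℝ} {c : ℝ} (hc : 0 ≤ c)
    (hf : ∀ m, 0 ≤ m → |f m| ≤ c) :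
    ‖absCalculus Q f‖ ≤ c := by
  refine norm_cfc_le hc fun q _ => ?_
  rcases eq_or_ne q 0 with rfl | hq
  · simpa [invSqrtLift_zero] using hc
  · simpa [invSqrtLift_of_ne hq] using hf _ (Real.sqrt_nonneg _)

open Filter Topology

theorem VanishesAtTop.mul_exp {f : ℝ → ℝ} (hf : VanishesAtTop f) {x : ℝ} (hx : 0 ≤ x) :
    VanishesAtTop fun m => f m * Real.exp (-(x * m)) := by
  refine ⟨hf.1.mul (by fun_prop), squeeze_zero_norm' ?_ (tendsto_norm_zero.comp hf.2)⟩
  filter_upwards [eventually_ge_atTop 0] with m hm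
  rw [norm_mul, Real.norm_eq_abs (Real.exp _), Real.abs_exp]
  exact mul_le_of_le_one_right (norm_nonneg _)
    (Real.exp_le_one_iff.2 (neg_nonpos.2 (mul_nonneg hx hm)))

theorem vanishesAtTop_inv : VanishesAtTop fun m => (1 + m ^ 2)⁻¹ := by
  refine ⟨Continuous.inv₀ (by fun_prop) fun m => by positivity, ?_⟩
  exact tendsto_inv_atTop_zero.comp
    (tendsto_atTop_add_const_left _ 1 (tendsto_pow_atTop two_ne_zero))

theorem vanishesAtTop_mul_inv : VanishesAtTop fun m => m * (1 + m ^ 2)⁻¹ := by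
  refine ⟨continuous_id.mul (Continuous.inv₀ (by fun_prop) fun m => by positivity), ?_⟩
  refine squeeze_zero_norm' ?_ tendsto_inv_atTop_zero
  filter_upwards [eventually_gt_atTop 0] with m hm
  rw [Real.norm_of_nonneg (by positivity), ← div_eq_mul_inv, div_le_iff₀ (by positivity)]
  field_simp
  linarith

theorem vanishesAtTop_pow_mul_exp (n : ℕ) {x : ℝ} (hx : 0 < x) :
    VanishesAtTop fun m => m ^ n * Real.exp (-(x * m)) := by
  refine ⟨by fun_prop, ?_⟩
  simpa [neg_mul] using tendsto_rpow_mul_exp_neg_mul_atTop_nhds_zero n x hx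

theorem VanishesAtTop.add {f g : ℝ → ℝ} (hf : VanishesAtTop f) (hg : VanishesAtTop g) :
    VanishesAtTop fun m => f m + g m :=
  ⟨hf.1.add hg.1, by simpa using hf.2.add hg.2⟩

theorem VanishesAtTop.sub {f g : ℝ → ℝ} (hf : VanishesAtTop f) (hg : VanishesAtTop g) :
    VanishesAtTop fun m => f m - g m :=
  ⟨hf.1.sub hg.1, by simpa using hf.2.sub hg.2⟩

theorem VanishesAtTop.const_mul {f : ℝ → ℝ} (hf : VanishesAtTop f) (c : ℝ) :
    VanishesAtTop fun m => c * f m :=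
  ⟨continuous_const.mul hf.1, by simpa using hf.2.const_mul c⟩

theorem vanishesAtTop_exp {x : ℝ} (hx : 0 < x) :
    VanishesAtTop fun m => Real.exp (-(x * m)) := by
  simpa using vanishesAtTop_pow_mul_exp 0 hx

theorem vanishesAtTop_mul_exp {x : ℝ} (hx : 0 < x) :
    VanishesAtTop fun m => m * Real.exp (-(x * m)) := by
  simpa using vanishesAtTop_pow_mul_exp 1 hx

theorem vanishesAtTop_one_add_sq_mul_exp {x : ℝ} (hx : 0 < x) :
    VanishesAtTop fun m => (1 + m ^ 2) * Real.exp (-(x * m)) := by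
  simpa [add_mul] using (vanishesAtTop_exp hx).add (vanishesAtTop_pow_mul_exp 2 hx)

theorem vanishesAtTop_mul_one_add_sq_mul_exp {x : ℝ} (hx : 0 < x) :
    VanishesAtTop fun m => m * (1 + m ^ 2) * Real.exp (-(x * m)) := by
  convert (vanishesAtTop_mul_exp hx).add (vanishesAtTop_pow_mul_exp 3 hx) using 2
  ring

theorem abs_exp_neg_sub_le {a b : ℝ} (ha : 0 ≤ a) (hb : 0 ≤ b) :
    |Real.exp (-b) - Real.exp (-a) + (b - a) * Real.exp (-a)| ≤ (b - a) ^ 2 := by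
  have key : ∀ s t : ℝ, Real.exp (-s) * (1 + (s - t)) ≤ Real.exp (-t) := by
    intro s t
    have h1 := Real.add_one_le_exp (s - t)
    have h2 : Real.exp (-t) = Real.exp (-s) * Real.exp (s - t) := by
      rw [← Real.exp_add]; ring_nf
    rw [h2]
    exact mul_le_mul_of_nonneg_left (by linarith) (Real.exp_pos _).le
  have h1 := key a b
  have h2 := key b a
  have ha1 : Real.exp (-a) ≤ 1 := Real.exp_le_one_iff.2 (by linarith)
  have hb1 : Real.exp (-b) ≤ 1 := Real.exp_le_one_iff.2 (by linarith)
  rw [abs_of_nonneg (by nlinarith)]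
  rcases le_total a b with hab | hab
  · nlinarith [mul_nonneg (sub_nonneg.2 hab) (sub_nonneg.2 hab), Real.exp_pos (-b),
      mul_le_mul_of_nonneg_left ha1 (sq_nonneg (b - a))]
  · nlinarith [mul_nonneg (sub_nonneg.2 hab) (sub_nonneg.2 hab), Real.exp_pos (-a),
      mul_le_mul_of_nonneg_left hb1 (sq_nonneg (b - a))]

/-- The operator `exp (-x|A|)`. -/
def absSemigroup (Q : H →L[ℂ] H) (x : ℝ) : H →L[ℂ] H :=
  absCalculus Q fun m => Real.exp (-(x * m))

/-- The operator `(1 + A²)⁻¹ exp (-x|A|)`. -/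
def smoothSemigroup (Q : H →L[ℂ] H) (x : ℝ) : H →L[ℂ] H :=
  absCalculus Q fun m => (1 + m ^ 2)⁻¹ * Real.exp (-(x * m))

/-- The operator `|A| (1 + A²)⁻¹`. -/
def absSnd (Q : H →L[ℂ] H) : H →L[ℂ] H := absCalculus Q fun m => m * (1 + m ^ 2)⁻¹

theorem norm_absSemigroup_le (Q : H →L[ℂ] H) {x : ℝ} (hx : 0 ≤ x) : ‖absSemigroup Q x‖ ≤ 1 := by
  refine norm_absCalculus_le Q zero_le_one fun m hm => ?_
  rw [Real.abs_exp]
  exact Real.exp_le_one_iff.2 (neg_nonpos.2 (mul_nonneg hx hm))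

theorem norm_absSemigroup_apply_le (Q : H →L[ℂ] H) {x : ℝ} (hx : 0 ≤ x) (k : H) :
    ‖absSemigroup Q x k‖ ≤ ‖k‖ := by
  simpa using (absSemigroup Q x).le_of_opNorm_le (norm_absSemigroup_le Q hx) k

namespace IsResolventPair

variable {A : H →ₗ.[ℂ] H} {Q D : H →L[ℂ] H} (h : IsResolventPair A Q D)
include h

theorem smoothSemigroup_zero : smoothSemigroup Q 0 = Q := by
  simpa [smoothSemigroup] using h.absCalculus_inv

theorem absSemigroup_mul_fst {x : ℝ} (hx : 0 < x) : absSemigroup Q x * Q = smoothSemigroup Q x := by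
  have := h.absCalculus_mul (vanishesAtTop_exp hx) vanishesAtTop_inv
    (k := fun m => (1 + m ^ 2)⁻¹ * Real.exp (-(x * m))) fun m _ => mul_comm _ _
  rwa [h.absCalculus_inv] at this

theorem norm_smoothSemigroup_sub_le {y z : ℝ} (hy : 0 ≤ y) (hz : 0 ≤ z) :
    ‖smoothSemigroup Q z - smoothSemigroup Q y - (z - y) •
      (-absCalculus Q fun m => m * (1 + m ^ 2)⁻¹ * Real.exp (-(y * m)))‖ ≤ (z - y) ^ 2 := by
  have hy' := vanishesAtTop_inv.mul_exp hy
  have hz' := vanishesAtTop_inv.mul_exp hz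
  have hE := vanishesAtTop_mul_inv.mul_exp hy
  have : smoothSemigroup Q z - smoothSemigroup Q y - (z - y) •
      (-absCalculus Q fun m => m * (1 + m ^ 2)⁻¹ * Real.exp (-(y * m))) = absCalculus Q fun m =>
        (1 + m ^ 2)⁻¹ * Real.exp (-(z * m)) - (1 + m ^ 2)⁻¹ * Real.exp (-(y * m)) -
          (-(z - y)) * (m * (1 + m ^ 2)⁻¹ * Real.exp (-(y * m))) := by
    rw [h.absCalculus_sub (hz'.sub hy') (hE.const_mul _), h.absCalculus_sub hz' hy',
      h.absCalculus_const_mul _ hE, smul_neg, neg_smul]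
    rfl
  rw [this]
  refine norm_absCalculus_le Q (sq_nonneg _) fun m hm => ?_
  have h1 := abs_exp_neg_sub_le (mul_nonneg hy hm) (mul_nonneg hz hm)
  have h2 : (1 + m ^ 2)⁻¹ * Real.exp (-(z * m)) - (1 + m ^ 2)⁻¹ * Real.exp (-(y * m)) -
      (-(z - y)) * (m * (1 + m ^ 2)⁻¹ * Real.exp (-(y * m))) = (1 + m ^ 2)⁻¹ *
      (Real.exp (-(z * m)) - Real.exp (-(y * m)) + (z * m - y * m) * Real.exp (-(y * m))) := by
    ring
  rw [h2, abs_mul, abs_of_pos (by positivity), inv_mul_le_iff₀ (by positivity)]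
  refine h1.trans ?_
  nlinarith [sq_nonneg (z - y)]

theorem hasDerivWithinAt_smoothSemigroup {y : ℝ} (hy : 0 ≤ y) :
    HasDerivWithinAt (smoothSemigroup Q)
      (-absCalculus Q fun m => m * (1 + m ^ 2)⁻¹ * Real.exp (-(y * m))) (Set.Ici 0) y := by
  rw [hasDerivWithinAt_iff_isLittleO]
  refine Asymptotics.IsBigO.trans_isLittleO (g := fun z => ‖z - y‖ ^ 2) ?_ ?_
  · refine Asymptotics.IsBigO.of_bound 1 ?_
    filter_upwards [self_mem_nhdsWithin] with z hz
    rw [one_mul, Real.norm_of_nonneg (sq_nonneg _), Real.norm_eq_abs, sq_abs]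
    exact h.norm_smoothSemigroup_sub_le hy hz
  · exact (Asymptotics.isLittleO_pow_sub_sub y one_lt_two).mono nhdsWithin_le_nhds

theorem continuousOn_smoothSemigroup : ContinuousOn (smoothSemigroup Q) (Set.Ici 0) :=
  fun _ hy => (h.hasDerivWithinAt_smoothSemigroup hy).continuousWithinAt

theorem hasDerivAt_absSemigroup {x : ℝ} (hx : 0 < x) :
    HasDerivAt (absSemigroup Q) (-absCalculus Q fun m => m * Real.exp (-(x * m))) x := by
  have hd : 0 < x / 2 := half_pos hx
  set W := absCalculus Q fun m => (1 + m ^ 2) * Real.exp (-(x / 2 * m)) with hW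
  have h1 : HasDerivAt (smoothSemigroup Q)
      (-absCalculus Q fun m => m * (1 + m ^ 2)⁻¹ * Real.exp (-(x / 2 * m))) (x - x / 2) := by
    rw [sub_half]
    exact (h.hasDerivWithinAt_smoothSemigroup hd.le).hasDerivAt (Ici_mem_nhds hd)
  have h2 := (h1.comp_sub_const x (x / 2)).mul_const W
  have h3 : (-absCalculus Q fun m => m * (1 + m ^ 2)⁻¹ * Real.exp (-(x / 2 * m))) * W =
      -absCalculus Q fun m => m * Real.exp (-(x * m)) := by
    rw [neg_mul, hW, h.absCalculus_mul (vanishesAtTop_mul_inv.mul_exp hd.le)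
      (vanishesAtTop_one_add_sq_mul_exp hd)]
    intro m _
    have : Real.exp (-(x * m)) = Real.exp (-(x / 2 * m)) * Real.exp (-(x / 2 * m)) := by
      rw [← Real.exp_add]; ring_nf
    rw [this]
    field_simp
  rw [h3] at h2
  refine h2.congr_of_eventuallyEq ?_
  filter_upwards [Ioi_mem_nhds (half_lt_self hx)] with z hz
  rw [hW, smoothSemigroup, h.absCalculus_mul (vanishesAtTop_inv.mul_exp (sub_pos.2 hz).le)
      (vanishesAtTop_one_add_sq_mul_exp hd), absSemigroup]
  intro m _
  have : Real.exp (-(z * m)) = Real.exp (-((z - x / 2) * m)) * Real.exp (-(x / 2 * m)) := by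
    rw [← Real.exp_add]; ring_nf
  rw [this]
  field_simp

theorem continuousOn_absCalculus_mul_exp :
    ContinuousOn (fun x : ℝ => absCalculus Q fun m => m * Real.exp (-(x * m))) (Set.Ioi 0) := by
  intro x hx
  rw [Set.mem_Ioi] at hx
  have hd : 0 < x / 2 := half_pos hx
  set W := absCalculus Q fun m => m * (1 + m ^ 2) * Real.exp (-(x / 2 * m)) with hW
  have h1 : ContinuousAt (smoothSemigroup Q) (x - x / 2) := by
    rw [sub_half]
    exact (h.continuousOn_smoothSemigroup _ hd.le).continuousAt (Ici_mem_nhds hd)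
  have h2 : ContinuousAt (fun z => smoothSemigroup Q (z - x / 2) * W) x :=
    (ContinuousAt.comp (f := fun z => z - x / 2) h1 (by fun_prop)).mul continuousAt_const
  refine (h2.congr ?_).continuousWithinAt
  filter_upwards [Ioi_mem_nhds (half_lt_self hx)] with z hz
  rw [hW, smoothSemigroup, h.absCalculus_mul (vanishesAtTop_inv.mul_exp (sub_pos.2 hz).le)
      (vanishesAtTop_mul_one_add_sq_mul_exp hd)]
  intro m _
  have : Real.exp (-(z * m)) = Real.exp (-((z - x / 2) * m)) * Real.exp (-(x / 2 * m)) := by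
    rw [← Real.exp_add]; ring_nf
  rw [this]
  field_simp

end IsResolventPair

theorem IsSelfAdjoint.denseRange_of_injective {T : H →L[ℂ] H} (hT : IsSelfAdjoint T)
    (hinj : ∀ h, T h = 0 → h = 0) : DenseRange T := by
  have h1 : T.rangeᗮ = ⊥ := by
    rw [T.orthogonal_range, hT.adjoint_eq, LinearMap.ker_eq_bot']
    exact hinj
  have h2 := Submodule.topologicalClosure_eq_top_iff.2 h1
  exact Submodule.dense_iff_topologicalClosure_eq_top.2 h2

/-- A family of contractions which converges strongly on a dense range converges strongly. -/
theorem tendsto_apply_of_denseRange {E ι : Type*} [NormedAddCommGroup E] [NormedSpace ℂ E]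
    {l : Filter ι} {T : ι → E →L[ℂ] E}
    {R S : E →L[ℂ] E} (hR : DenseRange R) (hT : ∀ᶠ i in l, ‖T i‖ ≤ 1) (hS : ‖S‖ ≤ 1)
    (h : ∀ k, Tendsto (fun i => T i (R k)) l (𝓝 (S (R k)))) (k : E) :
    Tendsto (fun i => T i k) l (𝓝 (S k)) := by
  rw [Metric.tendsto_nhds]
  intro ε hε
  obtain ⟨j, hj⟩ := hR.exists_dist_lt k (show 0 < ε / 3 by positivity)
  rw [dist_eq_norm] at hj
  filter_upwards [hT, (Metric.tendsto_nhds.1 (h j)) (ε / 3) (by positivity)] with i hi hij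
  rw [dist_eq_norm] at hij ⊢
  have h1 : ‖T i (k - R j)‖ ≤ ‖k - R j‖ := by simpa using (T i).le_of_opNorm_le hi (k - R j)
  have h2 : ‖S (k - R j)‖ ≤ ‖k - R j‖ := by simpa using S.le_of_opNorm_le hS (k - R j)
  have h3 : T i k - S k = T i (k - R j) + (T i (R j) - S (R j)) - S (k - R j) := by
    simp only [map_sub]; abel
  rw [h3]
  have h4 := norm_sub_le (T i (k - R j) + (T i (R j) - S (R j))) (S (k - R j))
  have h5 := norm_add_le (T i (k - R j)) (T i (R j) - S (R j))
  linarith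

theorem isSelfAdjoint_absSnd (Q : H →L[ℂ] H) : IsSelfAdjoint (absSnd Q) :=
  isSelfAdjoint_absCalculus _ _

namespace IsResolventPair

variable {A : H →ₗ.[ℂ] H} {Q D : H →L[ℂ] H} (h : IsResolventPair A Q D)
include h

theorem absSnd_mul_self : absSnd Q * absSnd Q = D * D := by
  have h1 := h.absCalculus_mul vanishesAtTop_inv vanishesAtTop_inv
    (k := fun m => (1 + m ^ 2)⁻¹ * (1 + m ^ 2)⁻¹) fun m _ => rfl
  have hV : VanishesAtTop fun m => (1 + m ^ 2)⁻¹ * (1 + m ^ 2)⁻¹ := by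
    refine ⟨vanishesAtTop_inv.1.mul vanishesAtTop_inv.1, ?_⟩
    simpa using vanishesAtTop_inv.2.mul vanishesAtTop_inv.2
  have h2 := h.absCalculus_sub vanishesAtTop_inv hV
  rw [← h1, h.absCalculus_inv, ← h.mul_self_snd] at h2
  rw [← h2, absSnd, h.absCalculus_mul vanishesAtTop_mul_inv vanishesAtTop_mul_inv]
  intro m _
  have : 1 + m ^ 2 ≠ 0 := by positivity
  field_simp
  ring

theorem commute_absSnd : Commute (absSnd Q) D := h.absCalculus_commute_snd _

theorem absSnd_injective (k : H) (hk : absSnd Q k = 0) : k = 0 := by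
  have h1 : (D * D) k = 0 := by rw [← h.absSnd_mul_self]; simp [hk]
  exact h.injective_snd _ (h.injective_snd _ h1)

theorem norm_absSemigroup_mul_absSnd_le {x : ℝ} (hx : 0 < x) :
    ‖absSemigroup Q x * absSnd Q‖ ≤ x⁻¹ := by
  rw [absSemigroup, absSnd, h.absCalculus_mul (vanishesAtTop_exp hx) vanishesAtTop_mul_inv
    fun m _ => rfl]
  refine norm_absCalculus_le Q (by positivity) fun m hm => ?_
  rw [abs_of_nonneg (by positivity)]
  have h1 : (x * m) * Real.exp (-(x * m)) ≤ 1 := by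
    rw [Real.exp_neg, mul_inv_le_iff₀ (Real.exp_pos _)]
    linarith [Real.add_one_le_exp (x * m)]
  have h2 : (1 + m ^ 2)⁻¹ ≤ 1 := inv_le_one_of_one_le₀ (by nlinarith)
  have h3 : m * Real.exp (-(x * m)) ≤ x⁻¹ := by
    rw [← one_div, le_div_iff₀ hx]
    linarith
  calc Real.exp (-(x * m)) * (m * (1 + m ^ 2)⁻¹) = m * Real.exp (-(x * m)) * (1 + m ^ 2)⁻¹ := by ring
    _ ≤ m * Real.exp (-(x * m)) := mul_le_of_le_one_right (by positivity) h2
    _ ≤ x⁻¹ := h3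

theorem tendsto_absSemigroup_zero (k : H) :
    Tendsto (fun x => absSemigroup Q x k) (𝓝[>] 0) (𝓝 k) := by
  refine tendsto_apply_of_denseRange (S := ContinuousLinearMap.id ℂ H)
    (h.isSelfAdjoint_fst.denseRange_of_injective h.injective_fst) ?_
    ContinuousLinearMap.norm_id_le (fun j => ?_) k
  · filter_upwards [self_mem_nhdsWithin] with x hx
    exact norm_absSemigroup_le Q (le_of_lt hx)
  · have h1 : Tendsto (smoothSemigroup Q) (𝓝[>] 0) (𝓝 Q) := by
      have := h.continuousOn_smoothSemigroup 0 Set.self_mem_Ici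
      rw [ContinuousWithinAt, h.smoothSemigroup_zero] at this
      exact this.mono_left (nhdsWithin_mono _ Set.Ioi_subset_Ici_self)
    have h2 : Tendsto (fun x => smoothSemigroup Q x j) (𝓝[>] 0) (𝓝 (Q j)) :=
      ((ContinuousLinearMap.apply ℂ H j).continuous.tendsto Q).comp h1
    refine h2.congr' ?_
    filter_upwards [self_mem_nhdsWithin] with x hx
    rw [← h.absSemigroup_mul_fst hx]
    rfl

theorem tendsto_absSemigroup_atTop (k : H) :
    Tendsto (fun x => absSemigroup Q x k) atTop (𝓝 0) := by
  refine tendsto_apply_of_denseRange (S := 0) (R := absSnd Q)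
    ((isSelfAdjoint_absSnd Q).denseRange_of_injective h.absSnd_injective) ?_
    (by simp) (fun j => ?_) k
  · filter_upwards [eventually_ge_atTop 0] with x hx
    exact norm_absSemigroup_le Q hx
  · refine squeeze_zero_norm' (a := fun x => x⁻¹ * ‖j‖) ?_ ?_
    · filter_upwards [eventually_gt_atTop 0] with x hx
      exact (absSemigroup Q x * absSnd Q).le_of_opNorm_le (h.norm_absSemigroup_mul_absSnd_le hx) j
    · simpa using tendsto_inv_atTop_zero.mul_const ‖j‖

theorem absSemigroup_mem_graph {x : ℝ} (hx : 0 < x) {s : ℂ} {k : H} (hk : absSnd Q k = s • D k) :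
    ∃ w : A.domain, (w : H) = absSemigroup Q x k ∧
      absCalculus Q (fun m => m * Real.exp (-(x * m))) k = s • A w := by
  set W := absCalculus Q fun m => (1 + m ^ 2) * Real.exp (-(x * m)) with hW
  obtain ⟨w, hw, hw'⟩ := A.mem_graph_iff.1 (h.mem_graph (W k))
  have h1 : Q * W = absSemigroup Q x := by
    have := h.absCalculus_mul vanishesAtTop_inv (vanishesAtTop_one_add_sq_mul_exp hx)
      (k := fun m => Real.exp (-(x * m))) fun m _ => by field_simp
    rwa [h.absCalculus_inv] at this
  have h2 : W * absSnd Q = absCalculus Q (fun m => m * Real.exp (-(x * m))) :=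
    h.absCalculus_mul (vanishesAtTop_one_add_sq_mul_exp hx) vanishesAtTop_mul_inv
      fun m _ => by field_simp
  refine ⟨w, hw.trans (by rw [← h1]; rfl), ?_⟩
  rw [hw', ← h2]
  change W (absSnd Q k) = s • (D * W) k
  rw [hk, map_smul, ← (h.absCalculus_commute_snd _).eq]
  rfl

theorem exists_add_eq (k : H) :
    ∃ k₁ k₂, absSnd Q k₁ = D k₁ ∧ absSnd Q k₂ = -D k₂ ∧ k₁ + k₂ = k := by
  set T := absSnd Q - D with hT
  have hTs : IsSelfAdjoint T := (isSelfAdjoint_absSnd Q).sub h.isSelfAdjoint_snd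
  have h0 : (absSnd Q + D) * T = 0 := by
    rw [hT, ← h.commute_absSnd.mul_self_sub_mul_self_eq, h.absSnd_mul_self, sub_self]
  have hcl : T.range.topologicalClosure ≤ (absSnd Q + D).ker := by
    refine Submodule.topologicalClosure_minimal _ ?_ (absSnd Q + D).isClosed_ker
    rintro _ ⟨v, rfl⟩
    exact congrArg (fun V : H →L[ℂ] H => V v) h0
  have : CompleteSpace T.ker := T.isClosed_ker.completeSpace_coe
  obtain ⟨k₁, hk₁, k₂, hk₂, rfl⟩ := T.ker.exists_add_mem_mem_orthogonal k
  rw [T.orthogonal_ker, hTs.adjoint_eq] at hk₂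
  refine ⟨k₁, k₂, sub_eq_zero.1 hk₁, eq_neg_of_add_eq_zero_left (hcl hk₂), rfl⟩

end IsResolventPair

theorem eq_of_hasDerivAt_zero {E : Type*} [NormedAddCommGroup E] [NormedSpace ℝ E] {f : ℝ → E}
    {a b : ℝ} (hab : a < b) (hf : ContinuousOn f (Set.Icc a b))
    (hf' : ∀ x ∈ Set.Ioo a b, HasDerivAt f 0 x) : f a = f b := by
  have hmid : (a + b) / 2 ∈ Set.Ioo a b := ⟨by linarith, by linarith⟩
  have h1 : Set.EqOn f (fun _ => f ((a + b) / 2)) (Set.Ioo a b) := fun x hx =>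
    isOpen_Ioo.is_const_of_deriv_eq_zero isPreconnected_Ioo
      (fun y hy => (hf' y hy).differentiableAt.differentiableWithinAt)
      (fun y hy => (hf' y hy).deriv) hx hmid
  have h2 : Set.EqOn f (fun _ => f ((a + b) / 2)) (Set.Icc a b) :=
    h1.of_subset_closure hf continuousOn_const Set.Ioo_subset_Icc_self
      (closure_Ioo hab.ne).ge
  rw [h2 (Set.left_mem_Icc.2 hab.le), h2 (Set.right_mem_Icc.2 hab.le)]

/-- Product rule in a real variable for the application of complex-linear operators. -/
theorem HasDerivAt.apply_of_complex {E : Type*} [NormedAddCommGroup E] [NormedSpace ℂ E]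
    {T : ℝ → E →L[ℂ] E} {T' : E →L[ℂ] E} {u : ℝ → E} {u' : E} {x : ℝ} (hT : HasDerivAt T T' x)
    (hu : HasDerivAt u u' x) : HasDerivAt (fun y => T y (u y)) (T' (u x) + T x u') x :=
  ((ContinuousLinearMap.restrictScalarsL ℂ E E ℝ ℝ).hasFDerivAt.comp_hasDerivAt x hT).clm_apply hu

/-- If `⟨J ψ, ψ⟩` is nonincreasing along `ψ` and `ψ` decays, then `⟨J ψ(0), ψ(0)⟩ ≥ 0`. -/
theorem re_inner_nonneg_of_tendsto_zero {J : H →L[ℂ] H} (hJ : IsSelfAdjoint J) {ψ ψ' : ℝ → H}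
    (hc : ContinuousOn ψ (Set.Ici 0)) (hd : ∀ x, 0 < x → HasDerivAt ψ (ψ' x) x)
    (hle : ∀ x, 0 < x → (⟪J (ψ' x), ψ x⟫_ℂ).re ≤ 0) (hlim : Tendsto ψ atTop (𝓝 0)) :
    0 ≤ (⟪J (ψ 0), ψ 0⟫_ℂ).re := by
  have hderiv : ∀ x, 0 < x → HasDerivAt (fun x => (⟪J (ψ x), ψ x⟫_ℂ).re)
      (2 * (⟪J (ψ' x), ψ x⟫_ℂ).re) x := by
    intro x hx
    have h1 : HasDerivAt (fun x => J (ψ x)) (J (ψ' x)) x :=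
      (J.restrictScalars ℝ).hasFDerivAt.comp_hasDerivAt x (hd x hx)
    have h2 := Complex.reCLM.hasFDerivAt.comp_hasDerivAt x (h1.inner ℂ (hd x hx))
    refine HasDerivAt.congr_deriv h2 ?_
    have h3 : ⟪J (ψ x), ψ' x⟫_ℂ = ⟪ψ x, J (ψ' x)⟫_ℂ :=
      (ContinuousLinearMap.isSelfAdjoint_iff_isSymmetric.1 hJ) (ψ x) (ψ' x)
    change (⟪J (ψ x), ψ' x⟫_ℂ + ⟪J (ψ' x), ψ x⟫_ℂ).re = _
    rw [Complex.add_re, h3, ← inner_conj_symm (ψ x), Complex.conj_re]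
    ring
  have hcont : ContinuousOn (fun x => (⟪J (ψ x), ψ x⟫_ℂ).re) (Set.Ici 0) :=
    Complex.continuous_re.comp_continuousOn ((J.continuous.comp_continuousOn hc).inner (𝕜 := ℂ) hc)
  have hanti : AntitoneOn (fun x => (⟪J (ψ x), ψ x⟫_ℂ).re) (Set.Ici 0) := by
    refine antitoneOn_of_hasDerivWithinAt_nonpos (convex_Ici 0) hcont
      (f' := fun x => 2 * (⟪J (ψ' x), ψ x⟫_ℂ).re) ?_ ?_ <;> rw [interior_Ici]
    · exact fun x hx => (hderiv x hx).hasDerivWithinAt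
    · exact fun x hx => by linarith [hle x hx]
  have hlim' : Tendsto (fun x => (⟪J (ψ x), ψ x⟫_ℂ).re) atTop (𝓝 0) := by
    have h1 := ((J.continuous.tendsto 0).comp hlim).inner (𝕜 := ℂ) hlim
    have h2 := (Complex.continuous_re.tendsto _).comp h1
    simpa [Function.comp_def] using h2
  refine le_of_tendsto hlim' ?_
  filter_upwards [eventually_ge_atTop 0] with x hx
  exact hanti Set.self_mem_Ici hx hx

/-- The trajectory `x ↦ exp (-x|A|) k` on `[0, ∞)`, with value `k` at `x = 0`. -/
def absOrbit (Q : H →L[ℂ] H) (k : H) (x : ℝ) : H := if 0 < x then absSemigroup Q x k else k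

theorem absOrbit_zero (Q : H →L[ℂ] H) (k : H) : absOrbit Q k 0 = k := by simp [absOrbit]

theorem absOrbit_of_pos (Q : H →L[ℂ] H) (k : H) {x : ℝ} (hx : 0 < x) :
    absOrbit Q k x = absSemigroup Q x k := by simp [absOrbit, hx]

theorem norm_absOrbit_le (Q : H →L[ℂ] H) (k : H) (x : ℝ) : ‖absOrbit Q k x‖ ≤ ‖k‖ := by
  by_cases hx : 0 < x
  · rw [absOrbit_of_pos Q k hx]
    exact norm_absSemigroup_apply_le Q hx.le k
  · simp [absOrbit, hx]

/-- `u` is differentiable on `(0, ∞)` with `u' = -A u`. -/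
def SolvesOnIoi (A : H →ₗ.[ℂ] H) (u : ℝ → H) : Prop :=
  ∀ x, 0 < x → ∃ w : A.domain, (w : H) = u x ∧ HasDerivAt u (-A w) x

namespace IsResolventPair

variable {A : H →ₗ.[ℂ] H} {Q D : H →L[ℂ] H} (h : IsResolventPair A Q D)
include h

theorem hasDerivAt_absOrbit (k : H) {x : ℝ} (hx : 0 < x) :
    HasDerivAt (absOrbit Q k) (-absCalculus Q (fun m => m * Real.exp (-(x * m))) k) x := by
  have h1 : HasDerivAt (fun y => absSemigroup Q y k)
      ((-absCalculus Q (fun m => m * Real.exp (-(x * m)))) k) x :=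
    ((ContinuousLinearMap.apply ℂ H k).restrictScalars ℝ).hasFDerivAt.comp_hasDerivAt x
      (h.hasDerivAt_absSemigroup hx)
  refine h1.congr_of_eventuallyEq ?_
  filter_upwards [Ioi_mem_nhds hx] with y hy
  exact absOrbit_of_pos Q k hy

theorem continuousOn_absOrbit (k : H) : ContinuousOn (absOrbit Q k) (Set.Ici 0) := by
  intro x hx
  rcases eq_or_lt_of_le (Set.mem_Ici.1 hx) with rfl | hx
  · rw [← continuousWithinAt_Ioi_iff_Ici, ContinuousWithinAt, absOrbit_zero]
    refine (h.tendsto_absSemigroup_zero k).congr' ?_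
    filter_upwards [self_mem_nhdsWithin] with y hy
    exact (absOrbit_of_pos Q k hy).symm
  · exact (h.hasDerivAt_absOrbit k hx).continuousAt.continuousWithinAt

theorem tendsto_absOrbit_atTop (k : H) : Tendsto (absOrbit Q k) atTop (𝓝 0) := by
  refine (h.tendsto_absSemigroup_atTop k).congr' ?_
  filter_upwards [eventually_gt_atTop 0] with y hy
  exact (absOrbit_of_pos Q k hy).symm

theorem smoothSemigroup_apply {y : ℝ} (hy : 0 < y) (k : H) :
    smoothSemigroup Q y k = absSemigroup Q y (Q k) := by
  rw [← h.absSemigroup_mul_fst hy]; rfl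

theorem absSemigroup_absSnd {y : ℝ} (hy : 0 < y) (k : H) : absSemigroup Q y (absSnd Q k) =
    absCalculus Q (fun m => m * (1 + m ^ 2)⁻¹ * Real.exp (-(y * m))) k := by
  have := h.absCalculus_mul (vanishesAtTop_exp hy) vanishesAtTop_mul_inv
    (k := fun m => m * (1 + m ^ 2)⁻¹ * Real.exp (-(y * m))) fun m _ => mul_comm _ _
  rw [← this]; rfl

theorem hasDerivAt_smoothSemigroup {y : ℝ} (hy : 0 < y) :
    HasDerivAt (smoothSemigroup Q)
      (-absCalculus Q fun m => m * (1 + m ^ 2)⁻¹ * Real.exp (-(y * m))) y :=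
  (h.hasDerivWithinAt_smoothSemigroup hy.le).hasDerivAt (Ici_mem_nhds hy)

theorem absSnd_comm_fst (k : H) : Q (absSnd Q k) = absSnd Q (Q k) := by
  have := (absCalculus_commute Q (fun m => (1 + m ^ 2)⁻¹) (fun m => m * (1 + m ^ 2)⁻¹)).eq
  rw [h.absCalculus_inv] at this
  exact congrArg (fun V : H →L[ℂ] H => V k) this

theorem absSemigroup_comm_fst (x : ℝ) (k : H) :
    Q (absSemigroup Q x k) = absSemigroup Q x (Q k) := by
  have := (absCalculus_commute Q (fun m => (1 + m ^ 2)⁻¹) (fun m => Real.exp (-(x * m)))).eq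
  rw [h.absCalculus_inv] at this
  exact congrArg (fun V : H →L[ℂ] H => V k) this

/-- A trajectory of `v' = |A| v` which is bounded on `[x, ∞)` vanishes at `x`. -/
theorem eq_zero_of_bounded_growth {v v' : ℝ → H} {x C : ℝ}
    (hv : ∀ y, x ≤ y → HasDerivAt v (v' y) y) (hQ : ∀ y, x ≤ y → Q (v' y) = absSnd Q (v y))
    (hC : ∀ y, x ≤ y → ‖v y‖ ≤ C) : v x = 0 := by
  have hconst : ∀ y, 0 < y → Q (v x) = absSemigroup Q y (Q (v (x + y))) := by
    intro y hy
    have h1 := eq_of_hasDerivAt_zero (f := fun z => smoothSemigroup Q z (v (x + z))) hy ?_ ?_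
    · simpa [h.smoothSemigroup_zero, h.smoothSemigroup_apply hy] using h1
    · refine (h.continuousOn_smoothSemigroup.mono Set.Icc_subset_Ici_self).clm_apply ?_
      refine ContinuousOn.comp (t := Set.Ici x) (f := fun z => x + z)
        (fun z hz => (hv z hz).continuousAt.continuousWithinAt) (by fun_prop) fun z hz => ?_
      exact le_add_of_nonneg_right hz.1
    · intro z hz
      have hz' : x ≤ x + z := le_add_of_nonneg_right hz.1.le
      have h2 : HasDerivAt (fun z => v (x + z)) (v' (x + z)) z := (hv _ hz').comp_const_add x z
      have h3 := (h.hasDerivAt_smoothSemigroup hz.1).apply_of_complex h2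
      convert h3 using 1
      simp [h.smoothSemigroup_apply hz.1, hQ _ hz', h.absSemigroup_absSnd hz.1]
  have hzero : absSnd Q (Q (v x)) = 0 := by
    have hC0 : 0 ≤ C := (norm_nonneg _).trans (hC x le_rfl)
    have h1 : ∀ᶠ y : ℝ in atTop, ‖absSnd Q (Q (v x))‖ ≤ y⁻¹ * (‖Q‖ * C) := by
      filter_upwards [eventually_gt_atTop 0] with y hy
      have h2 : absSnd Q (Q (v x)) = (absSemigroup Q y * absSnd Q) (Q (v (x + y))) := by
        rw [hconst y hy]
        exact congrArg (fun V : H →L[ℂ] H => V (Q (v (x + y)))) (absCalculus_commute Q _ _).eq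
      rw [h2]
      refine (ContinuousLinearMap.le_of_opNorm_le _ (h.norm_absSemigroup_mul_absSnd_le hy) _).trans
        (mul_le_mul_of_nonneg_left ?_ (by positivity))
      exact Q.le_opNorm_of_le (hC _ (le_add_of_nonneg_right hy.le))
    have h2 : Tendsto (fun y : ℝ => y⁻¹ * (‖Q‖ * C)) atTop (𝓝 0) := by
      simpa using tendsto_inv_atTop_zero.mul_const (‖Q‖ * C)
    exact norm_le_zero_iff.1 (ge_of_tendsto h2 h1)
  exact h.injective_fst _ (h.absSnd_injective _ hzero)

theorem absSnd_eq_of_bounded {u : ℝ → H} (hu : SolvesOnIoi A u) (hc : ContinuousOn u (Set.Ici 0))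
    {C : ℝ} (hC : ∀ x ∈ Set.Ici (0 : ℝ), ‖u x‖ ≤ C) :
    Set.EqOn (fun x => absSnd Q (u x)) (fun x => D (u x)) (Set.Ici 0) := by
  have hpos : Set.EqOn (fun x => absSnd Q (u x)) (fun x => D (u x)) (Set.Ioi 0) := by
    intro x hx
    choose! w hw hd using hu
    have hx0 : ∀ y, x ≤ y → 0 < y := fun y hy => lt_of_lt_of_le hx hy
    refine sub_eq_zero.1 (h.eq_zero_of_bounded_growth (v := fun y => (absSnd Q - D) (u y))
      (v' := fun y => (absSnd Q - D) (-A (w y))) (x := x) (C := ‖absSnd Q - D‖ * C) ?_ ?_ ?_)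
    · intro y hy
      exact ((absSnd Q - D).restrictScalars ℝ).hasFDerivAt.comp_hasDerivAt y (hd y (hx0 y hy))
    · intro y hy
      have h1 : ∀ k, Q ((absSnd Q - D) k) = (absSnd Q - D) (Q k) := by
        intro k
        have h2 : Q (D k) = D (Q k) := congrArg (fun V : H →L[ℂ] H => V k) h.commute.eq
        simp [h.absSnd_comm_fst, h2]
      have h3 : ∀ k, (absSnd Q - D) (D k) + absSnd Q ((absSnd Q - D) k) = 0 := by
        intro k
        have h4 : absSnd Q (D k) = D (absSnd Q k) :=
          congrArg (fun V : H →L[ℂ] H => V k) h.commute_absSnd.eq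
        have h5 : absSnd Q (absSnd Q k) = D (D k) :=
          congrArg (fun V : H →L[ℂ] H => V k) h.absSnd_mul_self
        simp [h4, h5]
      rw [h1, map_neg, h.apply_map, hw y (hx0 y hy), map_neg, neg_eq_iff_add_eq_zero]
      exact h3 _
    · intro y hy
      exact (absSnd Q - D).le_opNorm_of_le (hC y (hx0 y hy).le)
  exact hpos.of_subset_closure ((absSnd Q).continuous.comp_continuousOn hc)
    (D.continuous.comp_continuousOn hc) Set.Ioi_subset_Ici_self (closure_Ioi 0).ge

theorem eqOn_absOrbit {u : ℝ → H} (hu : SolvesOnIoi A u) (hc : ContinuousOn u (Set.Ici 0))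
    {C : ℝ} (hC : ∀ x ∈ Set.Ici (0 : ℝ), ‖u x‖ ≤ C) :
    Set.EqOn u (absOrbit Q (u 0)) (Set.Ici 0) := by
  intro X hX
  rcases eq_or_lt_of_le (Set.mem_Ici.1 hX) with rfl | hX
  · rw [absOrbit_zero]
  have hED := h.absSnd_eq_of_bounded hu hc hC
  rw [absOrbit_of_pos Q _ hX, ← sub_eq_zero]
  refine h.injective_fst _ ?_
  rw [map_sub, sub_eq_zero, h.absSemigroup_comm_fst, ← h.smoothSemigroup_apply hX]
  have h1 := eq_of_hasDerivAt_zero (f := fun z => smoothSemigroup Q (X - z) (u z)) hX ?_ ?_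
  · simpa [h.smoothSemigroup_zero] using h1.symm
  · refine ContinuousOn.clm_apply ?_ (hc.mono Set.Icc_subset_Ici_self)
    exact h.continuousOn_smoothSemigroup.comp (by fun_prop) fun z hz => sub_nonneg.2 hz.2
  · intro z hz
    obtain ⟨w, hw, hd⟩ := hu z hz.1
    have hXz : 0 < X - z := sub_pos.2 hz.2
    have h3 := ((h.hasDerivAt_smoothSemigroup hXz).comp_const_sub X z).apply_of_complex hd
    convert h3 using 1
    have h4 : absSnd Q (u z) = D (u z) := hED hz.1.le
    simp [h.smoothSemigroup_apply hXz, h.apply_map, hw, ← h4, h.absSemigroup_absSnd hXz]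

end IsResolventPair

theorem IsSignatureOperator.apply_apply_s1 {J : H →L[ℂ] H} (hJ : IsSignatureOperator J) (h : H) :
    J (J h) = h :=
  congrArg (fun T : H →L[ℂ] H => T h) hJ.2

theorem IsSignatureOperator.inner_apply_s1 {J : H →L[ℂ] H} (hJ : IsSignatureOperator J) (h k : H) :
    ⟪J h, k⟫_ℂ = ⟪h, J k⟫_ℂ :=
  (ContinuousLinearMap.isSelfAdjoint_iff_isSymmetric.1 hJ.1) h k

theorem IsSignatureOperator.norm_apply {J : H →L[ℂ] H} (hJ : IsSignatureOperator J) (h : H) :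
    ‖J h‖ = ‖h‖ := by
  rw [@norm_eq_sqrt_re_inner ℂ, @norm_eq_sqrt_re_inner ℂ, hJ.inner_apply_s1, hJ.apply_apply_s1]

theorem IsSignatureOperator.norm_le_two_mul_norm_Pplus {J : H →L[ℂ] H}
    (hJ : IsSignatureOperator J) {v : H} (hv : 0 ≤ (⟪J v, v⟫_ℂ).re) :
    ‖v‖ ≤ 2 * ‖Pplus J v‖ := by
  have h1 : 2 * ‖Pplus J v‖ = ‖J v + v‖ := by
    have : Pplus J v = (2⁻¹ : ℂ) • (J v + v) := by simp [Pplus, add_comm]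
    rw [this, norm_smul]
    norm_num
    ring
  rw [h1]
  have h2 := @norm_add_sq ℂ _ _ _ _ (J v) v
  rw [hJ.norm_apply] at h2
  change _ = _ + 2 * (⟪J v, v⟫_ℂ).re + _ at h2
  exact le_of_sq_le_sq (by nlinarith [sq_nonneg ‖v‖]) (norm_nonneg _)

/-- If `V` is closed and nonnegative for `⟨J ·, ·⟩`, and every vector is the sum of an element
of `V` and a nonpositive vector, then `P₊` maps `V` onto `H₊`. -/
theorem IsSignatureOperator.exists_Pplus_eq {J : H →L[ℂ] H} (hJ : IsSignatureOperator J)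
    {V : Submodule ℂ H} (hV : IsClosed (V : Set H)) (hpos : ∀ v ∈ V, 0 ≤ (⟪J v, v⟫_ℂ).re)
    (hdec : ∀ h, ∃ v ∈ V, (⟪J (h - v), h - v⟫_ℂ).re ≤ 0) {φ : H} (hφ : J φ = φ) :
    ∃ v ∈ V, Pplus J v = φ := by
  have : CompleteSpace V := hV.completeSpace_coe
  let T : V →L[ℂ] H := Pplus J ∘L V.subtypeL
  have hanti : AntilipschitzWith 2 T :=
    T.antilipschitz_of_bound fun v => by
      exact hJ.norm_le_two_mul_norm_Pplus (hpos v v.2)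
  have hcl : IsClosed (T.range : Set H) := by
    exact hanti.isClosed_range T.uniformContinuous
  have : CompleteSpace T.range := hcl.completeSpace_coe
  obtain ⟨_, ⟨p, rfl⟩, r, hr, hpr⟩ := T.range.exists_add_mem_mem_orthogonal φ
  have hJT : ∀ w : V, J (T w) = T w := by
    intro w
    simp [T, Pplus, hJ.apply_apply_s1, add_comm]
  have hJr : J r = r := by
    have h1 : r = φ - T p := by rw [hpr]; simp
    rw [h1, map_sub, hφ, hJT]
  have hrV : ∀ w ∈ V, ⟪w, r⟫_ℂ = 0 := by
    intro w hw
    have h1 : ⟪T ⟨w, hw⟩, r⟫_ℂ = 0 := (Submodule.mem_orthogonal _ _).1 hr _ ⟨⟨w, hw⟩, rfl⟩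
    have h2 : ⟪T ⟨w, hw⟩, r⟫_ℂ = ⟪w, r⟫_ℂ := by
      simp only [T, Pplus, ContinuousLinearMap.comp_apply, smul_apply,
        add_apply, ContinuousLinearMap.id_apply, Submodule.subtypeL_apply,
        inner_smul_left, inner_add_left, hJ.inner_apply_s1, hJr]
      rw [← two_mul, ← mul_assoc, map_inv₀, Complex.conj_ofNat, inv_mul_cancel₀ two_ne_zero, one_mul]
    rw [← h2, h1]
  obtain ⟨w, hw, hneg⟩ := hdec r
  have h0 : r = 0 := by
    have h1 : ⟪r, w⟫_ℂ = 0 := inner_eq_zero_symm.1 (hrV w hw)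
    have h2 : ⟪J w, r⟫_ℂ = 0 := by rw [hJ.inner_apply_s1, hJr, hrV w hw]
    rw [map_sub, hJr, inner_sub_left, inner_sub_right, inner_sub_right, h1, h2] at hneg
    have h3 : (⟪r, r⟫_ℂ).re = ‖r‖ ^ 2 := (@norm_sq_eq_re_inner ℂ _ _ _ _ r).symm
    simp only [sub_zero, zero_sub, sub_neg_eq_add, Complex.add_re, h3] at hneg
    have h4 := hpos w hw
    have h5 : ‖r‖ ^ 2 = 0 := le_antisymm (by linarith) (sq_nonneg _)
    exact norm_eq_zero.1 (pow_eq_zero_iff two_ne_zero |>.1 h5)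
  refine ⟨p, p.2, ?_⟩
  rw [hpr, h0, add_zero]
  rfl

theorem IsPositivePMap.re_inner_nonneg {L : H →ₗ.[ℂ] H} (hL : IsPositivePMap L) (b : L.domain) :
    0 ≤ (⟪L b, (b : H)⟫_ℂ).re := by
  rcases eq_or_ne (b : H) 0 with hb | hb
  · simp [hb]
  · exact (Complex.pos_iff.1 (hL b hb)).1.le

/-- The operator `A` is the conjugate of `B` by `S`. -/
def IsConjugate (S : H ≃L[ℂ] H) (A B : H →ₗ.[ℂ] H) : Prop :=
  (A.domain : Set H) = (fun h => S h) '' (B.domain : Set H) ∧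
    ∀ (h : B.domain) (hSh : S (h : H) ∈ A.domain), A ⟨S (h : H), hSh⟩ = S (B h)

theorem IsConjugate.exists_domain_left {S : H ≃L[ℂ] H} {A B : H →ₗ.[ℂ] H} (h : IsConjugate S A B)
    (b : B.domain) : ∃ w : A.domain, (w : H) = S b ∧ A w = S (B b) := by
  have hw : S b ∈ A.domain := by
    rw [← SetLike.mem_coe, h.1]
    exact ⟨b, b.2, rfl⟩
  exact ⟨⟨S b, hw⟩, rfl, h.2 b hw⟩

theorem IsConjugate.exists_domain_right {S : H ≃L[ℂ] H} {A B : H →ₗ.[ℂ] H} (h : IsConjugate S A B)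
    (w : A.domain) : ∃ b : B.domain, (b : H) = S.symm w ∧ B b = S.symm (A w) := by
  have hw : (w : H) ∈ (A.domain : Set H) := w.2
  rw [h.1] at hw
  obtain ⟨b, hb, hbw⟩ := hw
  obtain ⟨w', hw', hA⟩ := h.exists_domain_left ⟨b, hb⟩
  have h1 : w' = w := Subtype.ext (hw'.trans hbw)
  refine ⟨⟨b, hb⟩, ?_, ?_⟩
  · simp [← hbw]
  · rw [← h1, hA, S.symm_apply_apply]

theorem injective_of_isConjugate {J : H →L[ℂ] H} (hJ : IsSignatureOperator J) {L A : H →ₗ.[ℂ] H}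
    (hL : IsPositivePMap L) {S : H ≃L[ℂ] H} (hS : IsConjugate S A (pmapComp J L)) (w : A.domain)
    (hw : A w = 0) : (w : H) = 0 := by
  obtain ⟨b, hb, hB⟩ := hS.exists_domain_right w
  let c : L.domain := b
  have h1 : J (L c) = 0 := by
    have : J (L c) = S.symm (A w) := hB
    rw [this, hw, map_zero]
  have h2 : L c = 0 := by rw [← hJ.apply_apply_s1 (L c), h1, map_zero]
  have h3 : (c : H) = 0 := by
    by_contra hc
    have := hL c hc
    simp [h2] at this
  exact S.symm.map_eq_zero_iff.1 (hb.symm.trans h3)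

theorem re_inner_absOrbit_nonneg {J : H →L[ℂ] H} (hJ : IsSignatureOperator J) {L A : H →ₗ.[ℂ] H}
    (hL : IsPositivePMap L) {S : H ≃L[ℂ] H} (hS : IsConjugate S A (pmapComp J L))
    {Q D : H →L[ℂ] H} (h : IsResolventPair A Q D) {s : ℝ} (hs : s * s = 1) {k : H}
    (hk : absSnd Q k = (s : ℂ) • D k) : 0 ≤ s * (⟪J (S.symm k), S.symm k⟫_ℂ).re := by
  have hsJ : IsSelfAdjoint ((s : ℂ) • J) :=
    IsSelfAdjoint.smul (Complex.conj_ofReal s) hJ.1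
  have h1 := re_inner_nonneg_of_tendsto_zero (ψ := fun x => S.symm (absOrbit Q k x)) hsJ
    (ψ' := fun x => S.symm (-absCalculus Q (fun m => m * Real.exp (-(x * m))) k))
    (S.symm.continuous.comp_continuousOn (h.continuousOn_absOrbit k))
    (fun x hx => ((S.symm : H →L[ℂ] H).restrictScalars ℝ).hasFDerivAt.comp_hasDerivAt x
      (h.hasDerivAt_absOrbit k hx)) ?_ ?_
  · simpa [absOrbit_zero, inner_smul_left] using h1
  · intro x hx
    obtain ⟨w, hw, hA⟩ := h.absSemigroup_mem_graph hx hk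
    obtain ⟨b, hb, hB⟩ := hS.exists_domain_right w
    let c : L.domain := b
    have hB' : S.symm (A w) = J (L c) := hB.symm
    have h2 : ((s : ℂ) • J) (S.symm (-((s : ℂ) • A w))) = -L c := by
      rw [map_neg, map_smul, hB', smul_apply, map_neg, map_smul, hJ.apply_apply_s1, smul_neg,
        smul_smul, ← Complex.ofReal_mul, hs, Complex.ofReal_one, one_smul]
    have h3 : S.symm (absOrbit Q k x) = (c : H) := by
      rw [absOrbit_of_pos Q k hx, ← hw]; exact hb.symm
    simp only [hA, h2, h3, inner_neg_left, Complex.neg_re]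
    linarith [hL.re_inner_nonneg c]
  · have h2 := (S.symm.continuous.tendsto 0).comp (h.tendsto_absOrbit_atTop k)
    simpa [Function.comp_def] using h2

theorem exists_bounded_solution {J : H →L[ℂ] H} {L A : H →ₗ.[ℂ] H}
    {S : H ≃L[ℂ] H} (hS : IsConjugate S A (pmapComp J L))
    {Q D : H →L[ℂ] H} (h : IsResolventPair A Q D) {k : H} (hk : absSnd Q k = D k) :
    ∃ ψ : ℝ → H, ContinuousOn ψ (Set.Ici 0) ∧
      IsStrongSolutionOn (pmapComp J L) (fun _ => 0) ψ (Set.Ioi 0) ∧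
      ψ 0 = S.symm k ∧ ∃ C : ℝ, ∀ x ∈ Set.Ici (0 : ℝ), ‖ψ x‖ ≤ C := by
  refine ⟨fun x => S.symm (absOrbit Q k x),
    S.symm.continuous.comp_continuousOn (h.continuousOn_absOrbit k),
    ⟨fun x => S.symm (-absCalculus Q (fun m => m * Real.exp (-(x * m))) k), ?_, ?_⟩,
    by simp [absOrbit_zero], ‖(S.symm : H →L[ℂ] H)‖ * ‖k‖, fun x _ => ?_⟩
  · exact S.symm.continuous.comp_continuousOn
      (h.continuousOn_absCalculus_mul_exp.clm_apply continuousOn_const).neg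
  · intro x hx
    refine ⟨((S.symm : H →L[ℂ] H).restrictScalars ℝ).hasFDerivAt.comp_hasDerivAt x
      (h.hasDerivAt_absOrbit k hx), ?_⟩
    obtain ⟨w, hw, hA⟩ := h.absSemigroup_mem_graph hx (s := 1) (by rw [hk, one_smul])
    obtain ⟨b, hb, hB⟩ := hS.exists_domain_right w
    have h3 : (b : H) = S.symm (absOrbit Q k x) := by
      rw [absOrbit_of_pos Q k hx, ← hw]; exact hb
    have hm : S.symm (absOrbit Q k x) ∈ (pmapComp J L).domain := by
      rw [← h3]
      exact b.2
    have h4 : (⟨S.symm (absOrbit Q k x), hm⟩ : (pmapComp J L).domain) = b :=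
      Subtype.ext h3.symm
    refine ⟨hm, ?_⟩
    beta_reduce
    rw [h4, hB, hA, one_smul, map_neg, add_zero]
  · exact (S.symm : H →L[ℂ] H).le_opNorm_of_le (norm_absOrbit_le Q k x)

theorem IsStrongSolutionOn.sub {B : H →ₗ.[ℂ] H} {ψ₁ ψ₂ : ℝ → H} {s : Set ℝ}
    (h₁ : IsStrongSolutionOn B (fun _ => 0) ψ₁ s) (h₂ : IsStrongSolutionOn B (fun _ => 0) ψ₂ s) :
    IsStrongSolutionOn B (fun _ => 0) (fun x => ψ₁ x - ψ₂ x) s := by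
  obtain ⟨ψ₁', hc₁, h₁⟩ := h₁
  obtain ⟨ψ₂', hc₂, h₂⟩ := h₂
  refine ⟨fun x => ψ₁' x - ψ₂' x, hc₁.sub hc₂, fun x hx => ?_⟩
  obtain ⟨hd₁, hm₁, he₁⟩ := h₁ x hx
  obtain ⟨hd₂, hm₂, he₂⟩ := h₂ x hx
  refine ⟨hd₁.sub hd₂, B.domain.sub_mem hm₁ hm₂, ?_⟩
  have h3 : (⟨ψ₁ x - ψ₂ x, B.domain.sub_mem hm₁ hm₂⟩ : B.domain) = ⟨ψ₁ x, hm₁⟩ - ⟨ψ₂ x, hm₂⟩ := rfl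
  beta_reduce
  rw [h3, B.map_sub, he₁, he₂]
  abel

theorem IsStrongSolutionOn.solvesOnIoi {A B : H →ₗ.[ℂ] H} {S : H ≃L[ℂ] H}
    (hS : IsConjugate S A B) {ψ : ℝ → H}
    (hψ : IsStrongSolutionOn B (fun _ => 0) ψ (Set.Ioi 0)) : SolvesOnIoi A fun x => S (ψ x) := by
  obtain ⟨ψ', -, hψ⟩ := hψ
  intro x hx
  obtain ⟨hd, hm, he⟩ := hψ x hx
  obtain ⟨w, hw, hA⟩ := hS.exists_domain_left ⟨ψ x, hm⟩
  refine ⟨w, hw, ?_⟩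
  have h1 := ((S : H →L[ℂ] H).restrictScalars ℝ).hasFDerivAt.comp_hasDerivAt x hd
  refine HasDerivAt.congr_deriv h1 ?_
  change S (ψ' x) = _
  rw [he, hA, add_zero, map_neg]

theorem eqOn_zero_of_bounded_solution {J : H →L[ℂ] H} (hJ : IsSignatureOperator J)
    {L A : H →ₗ.[ℂ] H} (hL : IsPositivePMap L) {S : H ≃L[ℂ] H}
    (hS : IsConjugate S A (pmapComp J L)) {Q D : H →L[ℂ] H} (h : IsResolventPair A Q D)
    {ψ : ℝ → H} (hc : ContinuousOn ψ (Set.Ici 0))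
    (hψ : IsStrongSolutionOn (pmapComp J L) (fun _ => 0) ψ (Set.Ioi 0))
    (h0 : Pplus J (ψ 0) = 0) {C : ℝ} (hC : ∀ x ∈ Set.Ici (0 : ℝ), ‖ψ x‖ ≤ C) :
    ∀ x ∈ Set.Ici (0 : ℝ), ψ x = 0 := by
  have hu := hψ.solvesOnIoi hS
  have huc : ContinuousOn (fun x => S (ψ x)) (Set.Ici 0) := S.continuous.comp_continuousOn hc
  have huC : ∀ x ∈ Set.Ici (0 : ℝ), ‖S (ψ x)‖ ≤ ‖(S : H →L[ℂ] H)‖ * C :=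
    fun x hx => (S : H →L[ℂ] H).le_opNorm_of_le (hC x hx)
  have hk : absSnd Q (S (ψ 0)) = D (S (ψ 0)) := h.absSnd_eq_of_bounded hu huc huC Set.self_mem_Ici
  have h1 := re_inner_absOrbit_nonneg hJ hL hS h (s := 1) (one_mul 1) (k := S (ψ 0))
    (by simpa using hk)
  rw [one_mul, S.symm_apply_apply] at h1
  have h2 := hJ.norm_le_two_mul_norm_Pplus h1
  rw [h0, norm_zero, mul_zero, norm_le_zero_iff] at h2
  intro x hx
  have h3 : S (ψ x) = absOrbit Q (S (ψ 0)) x := h.eqOn_absOrbit hu huc huC hx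
  have h4 := norm_absOrbit_le Q (S (ψ 0)) x
  rw [← h3, h2, map_zero, norm_zero, norm_le_zero_iff] at h4
  exact S.map_eq_zero_iff.1 h4

theorem exists_initial_value {J : H →L[ℂ] H} (hJ : IsSignatureOperator J)
    {L A : H →ₗ.[ℂ] H} (hL : IsPositivePMap L) {S : H ≃L[ℂ] H}
    (hS : IsConjugate S A (pmapComp J L)) {Q D : H →L[ℂ] H} (h : IsResolventPair A Q D)
    {φ : H} (hφ : J φ = φ) : ∃ k, absSnd Q k = D k ∧ Pplus J (S.symm k) = φ := by
  let T : H →L[ℂ] H := (absSnd Q - D) ∘L (S : H →L[ℂ] H)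
  have hT : ∀ v, v ∈ T.ker ↔ absSnd Q (S v) = D (S v) := fun v => sub_eq_zero
  suffices hV : ∃ v ∈ T.ker, Pplus J v = φ by
    obtain ⟨v, hv, hvφ⟩ := hV
    exact ⟨S v, (hT v).1 hv, by rwa [S.symm_apply_apply]⟩
  refine hJ.exists_Pplus_eq (V := T.ker) T.isClosed_ker ?_ ?_ hφ
  · intro v hv
    have h1 := re_inner_absOrbit_nonneg hJ hL hS h (s := 1) (one_mul 1) (k := S v)
      (by simpa using (hT v).1 hv)
    rwa [one_mul, S.symm_apply_apply] at h1
  · intro g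
    obtain ⟨k₁, k₂, hk₁, hk₂, hk⟩ := h.exists_add_eq (S g)
    refine ⟨S.symm k₁, (hT _).2 (by simpa using hk₁), ?_⟩
    have h1 : g - S.symm k₁ = S.symm k₂ := by
      rw [← S.symm_apply_apply g, ← hk, map_add, add_sub_cancel_left]
    have h2 := re_inner_absOrbit_nonneg hJ hL hS h (s := -1) (by norm_num) (k := k₂)
      (by simpa using hk₂)
    rw [h1]
    linarith

/-- Half-space problem: if `L = L* > 0` is densely defined and `B = JL` is
similar to a self-adjoint operator, then for every `φ₊ ∈ H₊` there is a unique bounded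
solution of `dψ/dx = -Bψ` on `(0,∞)` with `P₊ψ(0) = φ₊`. -/
theorem statement1 (J : H →L[ℂ] H) (hJ : IsSignatureOperator J)
    (L : H →ₗ.[ℂ] H) (hdense : Dense (L.domain : Set H))
    (hLsa : IsSelfAdjoint L) (hLpos : IsPositivePMap L)
    (hsim : SimilarToSelfAdjoint (pmapComp J L))
    (φp : H) (hφp : J φp = φp) :
    (∃ ψ : ℝ → H,
        ContinuousOn ψ (Set.Ici 0) ∧
        IsStrongSolutionOn (pmapComp J L) (fun _ => 0) ψ (Set.Ioi 0) ∧
        Pplus J (ψ 0) = φp ∧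
        (∃ C : ℝ, ∀ x ∈ Set.Ici (0 : ℝ), ‖ψ x‖ ≤ C)) ∧
    (∀ ψ₁ ψ₂ : ℝ → H,
        (ContinuousOn ψ₁ (Set.Ici 0) ∧
          IsStrongSolutionOn (pmapComp J L) (fun _ => 0) ψ₁ (Set.Ioi 0) ∧
          Pplus J (ψ₁ 0) = φp ∧
          (∃ C : ℝ, ∀ x ∈ Set.Ici (0 : ℝ), ‖ψ₁ x‖ ≤ C)) →
        (ContinuousOn ψ₂ (Set.Ici 0) ∧
          IsStrongSolutionOn (pmapComp J L) (fun _ => 0) ψ₂ (Set.Ioi 0) ∧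
          Pplus J (ψ₂ 0) = φp ∧
          (∃ C : ℝ, ∀ x ∈ Set.Ici (0 : ℝ), ‖ψ₂ x‖ ≤ C)) →
        Set.EqOn ψ₁ ψ₂ (Set.Ici 0)) := by
  obtain ⟨S, A, hA, hS⟩ := hsim
  obtain ⟨Q, D, h⟩ := exists_isResolventPair hA (injective_of_isConjugate hJ hLpos hS)
  constructor
  · obtain ⟨k, hk, hkφ⟩ := exists_initial_value hJ hLpos hS h hφp
    obtain ⟨ψ, hc, hψ, hψ0, hC⟩ := exists_bounded_solution hS h hk
    exact ⟨ψ, hc, hψ, by rw [hψ0, hkφ], hC⟩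
  · rintro ψ₁ ψ₂ ⟨hc₁, hψ₁, h0₁, C₁, hC₁⟩ ⟨hc₂, hψ₂, h0₂, C₂, hC₂⟩ x hx
    exact sub_eq_zero.1 (eqOn_zero_of_bounded_solution (ψ := fun y => ψ₁ y - ψ₂ y)
      hJ hLpos hS h (hc₁.sub hc₂) (hψ₁.sub hψ₂) (by rw [map_sub, h0₁, h0₂, sub_self])
      (C := C₁ + C₂) (fun y hy => (norm_sub_le _ _).trans (add_le_add (hC₁ y hy) (hC₂ y hy))) x hx)

end
end
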